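/- arXiv:2506.08281 — 5 statements merged into one kernel-verified Lean document; each statement's English description precedes it below -/
import Mathlib

section
/- Let Ω ⊂ ℝ^d (d ≥ 2) be a domain and let L u = tr(A D²u) + b·Du + c u, where A is symmetric and satisfies λ|ξ|² ≤ a^{ij}(x)ξ^i ξ^j ≤ Λ|ξ|² for all x ∈ Ω, ξ ∈ ℝ^d. Assume A ∈ C^α(Ω), b ∈ C^{1,α}(Ω), c ∈ C^{1,α}(Ω), and f ∈ C^{1,α}(Ω) for some α ∈ (0,1). Let u ∈ C²_loc(Ω) be a solution of L u = f in Ω with D²u(x^o) = 0 at some x^o ∈ Ω. Then the third derivative D³u(x^o) exists and there is a constant C such that |D²u(x) − ⟨D³u(x^o), x − x^o⟩| ≤ C |x − x^o|^{1+α} for all x sufficiently close to x^o; that is, u enjoys C^{3,α} regularity at any point where its Hessian vanishes. -/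
open MeasureTheory Metric Filter
open scoped RealInnerProductSpace ENNReal Topology

noncomputable section

/-- Euclidean space `ℝ^d`. -/
abbrev Euc (d : ℕ) := EuclideanSpace ℝ (Fin d)

/-- The mean oscillation function `ω_f(r) = sup_{x ∈ Ω} ⨍_{Ω ∩ B_r(x)} |f - (f)_{Ω ∩ B_r(x)}|`. -/
noncomputable def meanOsc {d : ℕ} {F : Type*} [NormedAddCommGroup F] [NormedSpace ℝ F]
    (Ω : Set (Euc d)) (f : Euc d → F) (r : ℝ) : ℝ :=
  ⨆ x : Ω, ⨍ y in Ω ∩ ball (x : Euc d) r, ‖f y - ⨍ z in Ω ∩ ball (x : Euc d) r, f z‖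

/-- `f` has Dini mean oscillation on `Ω`: `∫₀¹ ω_f(r)/r dr < ∞`. -/
def HasDMO {d : ℕ} {F : Type*} [NormedAddCommGroup F] [NormedSpace ℝ F]
    (Ω : Set (Euc d)) (f : Euc d → F) : Prop :=
  IntegrableOn (fun r => meanOsc Ω f r / r) (Set.Ioc (0 : ℝ) 1)

/-- A modulus of continuity: nonnegative, nondecreasing on `(0,∞)`, tending to `0` at `0⁺`. -/
def IsModulus (ρ : ℝ → ℝ) : Prop :=
  (∀ t, 0 ≤ ρ t) ∧ MonotoneOn ρ (Set.Ioi 0) ∧ Tendsto ρ (𝓝[>] 0) (𝓝 0)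

/-- The sup norm `‖g‖_{L^∞(s)}` (for continuous `g`). -/
noncomputable def supNorm {d : ℕ} {F : Type*} [NormedAddCommGroup F]
    (g : Euc d → F) (s : Set (Euc d)) : ℝ :=
  ⨆ x : s, ‖g (x : Euc d)‖

/-- `sup_{x ∈ Ω} ∫_{Ω ∩ B_r(x)} g`. -/
noncomputable def supInt {d : ℕ} (Ω : Set (Euc d)) (g : Euc d → ℝ) (r : ℝ) : ℝ :=
  ⨆ x : Ω, ∫ y in Ω ∩ ball (x : Euc d) r, g y

/-- The Hessian `D²u(x)` of `u` at `x`, as a continuous bilinear form. -/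
noncomputable def hess {d : ℕ} (u : Euc d → ℝ) (x : Euc d) :
    Euc d →L[ℝ] Euc d →L[ℝ] ℝ :=
  fderiv ℝ (fun y => fderiv ℝ u y) x

/-- The Dini sum `ω̃(t) = Σ_{i≥1} κ^{iβ} (ω(κ^{-i}t) if κ^{-i}t ≤ 1, else ω(1))`. -/
noncomputable def diniSum (ω : ℝ → ℝ) (κ β : ℝ) (t : ℝ) : ℝ :=
  ∑' i : ℕ, (κ ^ β) ^ (i + 1) *
    (if t / κ ^ (i + 1) ≤ 1 then ω (t / κ ^ (i + 1)) else ω 1)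

/-- The norm `|𝒮| = sup_{|ξ|=1} |𝒮(ξ,ξ,ξ)|` of a (0,3)-tensor. -/
noncomputable def tnorm {d : ℕ} (S : Euc d →L[ℝ] Euc d →L[ℝ] Euc d →L[ℝ] ℝ) : ℝ :=
  ⨆ ξ : sphere (0 : Euc d) 1, |S ξ.1 ξ.1 ξ.1|

/-- A fully symmetric (0,3)-tensor. -/
def Sym3 {d : ℕ} (S : Euc d →L[ℝ] Euc d →L[ℝ] Euc d →L[ℝ] ℝ) : Prop :=
  ∀ x y z : Euc d, S x y z = S y x z ∧ S x y z = S x z y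

/-- `u` is a weak solution of `div(A Du) + b·Du + c u = f` in `Ω`. -/
def IsWeakSolDiv {d : ℕ} (Ω : Set (Euc d)) (A : Euc d → Euc d →L[ℝ] Euc d)
    (b : Euc d → Euc d) (c f u : Euc d → ℝ) : Prop :=
  ∀ φ : Euc d → ℝ, ContDiff ℝ (⊤ : ℕ∞) φ → HasCompactSupport φ → tsupport φ ⊆ Ω →
    ∫ x in Ω, (⟪b x, gradient u x⟫ + c x * u x - f x) * φ x
      = ∫ x in Ω, ⟪A x (gradient u x), gradient φ x⟫

/-- Hölder continuity with exponent `α` on `s`. -/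
def HolderOnE {d : ℕ} {F : Type*} [NormedAddCommGroup F]
    (g : Euc d → F) (α : ℝ) (s : Set (Euc d)) : Prop :=
  ∃ M : ℝ, ∀ x ∈ s, ∀ y ∈ s, ‖g x - g y‖ ≤ M * ‖x - y‖ ^ α

/-- `v` is the weak gradient of `u` on `s`. -/
def IsWeakGrad {d : ℕ} (s : Set (Euc d)) (u : Euc d → ℝ) (v : Euc d → Euc d) : Prop :=
  ∀ φ : Euc d → ℝ, ContDiff ℝ (⊤ : ℕ∞) φ → HasCompactSupport φ → tsupport φ ⊆ s →
    ∫ x in s, u x • gradient φ x = - ∫ x in s, φ x • v x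

/-- `u ∈ W^{1,p}₀(s)`, with weak gradient `v`: `u, v ∈ L^p`, `v` is the weak gradient of `u`,
and `u` is approximable by smooth compactly supported functions in the `W^{1,p}` norm. -/
def MemW1p0 {d : ℕ} (p : ℝ) (s : Set (Euc d)) (u : Euc d → ℝ) (v : Euc d → Euc d) : Prop :=
  IsWeakGrad s u v ∧
  MemLp u (ENNReal.ofReal p) (volume.restrict s) ∧
  MemLp v (ENNReal.ofReal p) (volume.restrict s) ∧
  ∀ ε : ℝ, 0 < ε → ∃ φ : Euc d → ℝ, ContDiff ℝ (⊤ : ℕ∞) φ ∧ HasCompactSupport φ ∧ tsupport φ ⊆ s ∧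
    eLpNorm (fun x => u x - φ x) (ENNReal.ofReal p) (volume.restrict s) < ENNReal.ofReal ε ∧
    eLpNorm (fun x => v x - gradient φ x) (ENNReal.ofReal p) (volume.restrict s) < ENNReal.ofReal ε

/-- The quantity `φ(r) = (1/r) inf_{l ∈ 𝔄} (⨍_{B_r} |Du - l|^{1/2})²`, the infimum being over
affine maps `l(x) = Sx + p` with `S` symmetric. -/
noncomputable def phiFun {d : ℕ} (u : Euc d → ℝ) (r : ℝ) : ℝ :=
  (1 / r) * ⨅ S : {S : Euc d →L[ℝ] Euc d // ∀ ξ η, ⟪S ξ, η⟫ = ⟪ξ, S η⟫}, ⨅ p : Euc d,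
    (⨍ x in ball (0 : Euc d) r, Real.sqrt ‖gradient u x - S.1 x - p‖) ^ 2

end

section Kernel
open scoped ContDiff

variable {d : ℕ} {G : Type*} [NormedAddCommGroup G] [NormedSpace ℝ G]

lemma integrable_smul_cpt {w : Euc d → ℝ} (hw : Continuous w) {ψ : Euc d → G}
    (hψ : Continuous ψ) (hc : HasCompactSupport ψ) : Integrable (fun z => w z • ψ z) :=
  (hw.smul hψ).integrable_of_hasCompactSupport (hc.smul_left)

lemma hasDerivAt_I {w : Euc d → ℝ} (hw : ContDiff ℝ 1 w) {ψ : Euc d → G}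
    (hψ : Continuous ψ) (hc : HasCompactSupport ψ) (y v : Euc d) (s σ τ₀ : ℝ) :
    HasDerivAt (fun τ : ℝ => ∫ z, w (y + τ • v + (s + τ * σ) • z) • ψ z)
      (∫ z, (fderiv ℝ w (y + τ₀ • v + (s + τ₀ * σ) • z) (v + σ • z)) • ψ z) τ₀ := by
  have hK : IsCompact (Set.Icc (τ₀ - 1) (τ₀ + 1) ×ˢ tsupport ψ) := isCompact_Icc.prod hc
  have hcd : Continuous (fderiv ℝ w) := hw.continuous_fderiv one_ne_zero
  have hcont : Continuous (fun p : ℝ × Euc d =>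
      (fderiv ℝ w (y + p.1 • v + (s + p.1 * σ) • p.2) (v + σ • p.2)) • ψ p.2) := by
    refine Continuous.smul (Continuous.clm_apply (hcd.comp (by fun_prop)) (by fun_prop)) (by fun_prop)
  obtain ⟨M, hM⟩ := hK.exists_bound_of_continuousOn hcont.continuousOn
  have hMb : ∀ z, ∀ τ ∈ Set.Icc (τ₀ - 1) (τ₀ + 1),
      ‖(fderiv ℝ w (y + τ • v + (s + τ * σ) • z) (v + σ • z)) • ψ z‖
        ≤ (tsupport ψ).indicator (fun _ => M) z := by
    intro z τ hτ
    by_cases hz : z ∈ tsupport ψ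
    · rw [Set.indicator_of_mem hz]
      exact hM (τ, z) ⟨hτ, hz⟩
    · rw [Set.indicator_of_notMem hz, image_eq_zero_of_notMem_tsupport hz]
      simp
  refine (hasDerivAt_integral_of_dominated_loc_of_deriv_le
    (F := fun τ z => w (y + τ • v + (s + τ * σ) • z) • ψ z)
    (F' := fun τ z => (fderiv ℝ w (y + τ • v + (s + τ * σ) • z) (v + σ • z)) • ψ z)
    (bound := (tsupport ψ).indicator (fun _ => M))
    (Icc_mem_nhds (by linarith : τ₀ - 1 < τ₀) (by linarith : τ₀ < τ₀ + 1)) ?_ ?_ ?_ ?_ ?_ ?_).2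
  · refine Eventually.of_forall fun τ => ?_
    exact (integrable_smul_cpt (w := fun z => w (y + τ • v + (s + τ * σ) • z))
      (hw.continuous.comp (by fun_prop)) hψ hc).aestronglyMeasurable
  · exact (integrable_smul_cpt (w := fun z => w (y + τ₀ • v + (s + τ₀ * σ) • z))
      (hw.continuous.comp (by fun_prop)) hψ hc)
  · have : Continuous fun z => (fderiv ℝ w (y + τ₀ • v + (s + τ₀ * σ) • z)) (v + σ • z) :=
      Continuous.clm_apply (hcd.comp (by fun_prop)) (by fun_prop)
    exact (integrable_smul_cpt this hψ hc).aestronglyMeasurable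
  · exact Eventually.of_forall fun z τ hτ => hMb z τ hτ
  · rw [integrable_indicator_iff (isClosed_tsupport ψ).measurableSet]
    exact integrableOn_const hc.measure_lt_top.ne
  · refine Eventually.of_forall fun z τ _ => ?_
    have h1 : HasDerivAt (fun τ : ℝ => y + τ • v + (s + τ * σ) • z) (v + σ • z) τ := by
      have a : HasDerivAt (fun τ : ℝ => y + τ • v) v τ := by
        simpa using ((hasDerivAt_id τ).smul_const v).const_add y
      have b : HasDerivAt (fun τ : ℝ => (s + τ * σ) • z) (σ • z) τ := by
        simpa using (((hasDerivAt_id τ).mul_const σ).const_add s).smul_const z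
      exact a.add b
    have h2 := ((hw.differentiable one_ne_zero) (y + τ • v + (s + τ * σ) • z)).hasFDerivAt
    exact (h2.comp_hasDerivAt τ h1).smul_const (ψ z)

lemma fderiv_scale {w : Euc d → ℝ} (hw : ContDiff ℝ 1 w) (y : Euc d) (s : ℝ) (z a : Euc d) :
    fderiv ℝ (fun z => w (y + s • z)) z a = s * fderiv ℝ w (y + s • z) a := by
  have h1 : HasFDerivAt (fun z : Euc d => y + s • z) (s • ContinuousLinearMap.id ℝ (Euc d)) z :=
    ((hasFDerivAt_id z).const_smul s).const_add y
  have h2 := ((hw.differentiable one_ne_zero) (y + s • z)).hasFDerivAt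
  have := (h2.comp z h1).fderiv
  change fderiv ℝ (w ∘ fun z => y + s • z) z a = _
  rw [this]
  simp

/-- integration by parts -/
lemma ibp {w : Euc d → ℝ} (hw : ContDiff ℝ 1 w) {ψ : Euc d → G}
    (hψ : ContDiff ℝ 1 ψ) (hc : HasCompactSupport ψ) (y a : Euc d) (s : ℝ) :
    ∫ z, w (y + s • z) • fderiv ℝ ψ z a = -(s • ∫ z, (fderiv ℝ w (y + s • z) a) • ψ z) := by
  have hcd : Continuous (fderiv ℝ w) := hw.continuous_fderiv one_ne_zero
  have hsc : ContDiff ℝ 1 (fun z : Euc d => y + s • z) := by fun_prop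
  have hcdψ : Continuous (fun z => fderiv ℝ ψ z a) :=
    (hψ.continuous_fderiv one_ne_zero).clm_apply continuous_const
  have e1 : ∀ z, fderiv ℝ (fun z => w (y + s • z)) z a • ψ z
      = s • ((fderiv ℝ w (y + s • z) a) • ψ z) := by
    intro z; rw [fderiv_scale hw, mul_smul]
  have hi : Integrable (fun z => (fderiv ℝ w (y + s • z) a) • ψ z) :=
    integrable_smul_cpt (w := fun z => fderiv ℝ w (y + s • z) a)
      ((hcd.comp hsc.continuous).clm_apply continuous_const) hψ.continuous hc
  rw [integral_smul_fderiv_eq_neg_fderiv_smul_of_integrable (f := fun z => w (y + s • z))]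
  · simp_rw [e1]; rw [integral_smul]
  · simp_rw [e1]; exact hi.smul s
  · exact integrable_smul_cpt (w := fun z => w (y + s • z)) (hw.continuous.comp hsc.continuous)
      hcdψ (hc.fderiv_apply ℝ a)
  · exact integrable_smul_cpt (w := fun z => w (y + s • z)) (hw.continuous.comp hsc.continuous)
      hψ.continuous hc
  · intro x _; exact (hw.comp hsc).differentiable one_ne_zero x
  · intro x _; exact hψ.differentiable one_ne_zero x

lemma contDiff_fderiv_apply {w : Euc d → ℝ} (hw : ContDiff ℝ 2 w) (a : Euc d) :
    ContDiff ℝ 1 (fun x => fderiv ℝ w x a) :=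
  (hw.fderiv_right (m := 1) (by norm_num)).clm_apply contDiff_const

lemma hess_apply {w : Euc d → ℝ} (hw : ContDiff ℝ 2 w) (x a b : Euc d) :
    fderiv ℝ (fun x => fderiv ℝ w x a) x b = hess w x b a := by
  have h : DifferentiableAt ℝ (fderiv ℝ w) x :=
    (hw.fderiv_right (m := 1) (by norm_num)).differentiable one_ne_zero x
  have := (h.hasFDerivAt.clm_apply (hasFDerivAt_const a x)).fderiv
  rw [this]; simp [hess]

lemma hess_symm {w : Euc d → ℝ} (hw : ContDiff ℝ 2 w) (x a b : Euc d) :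
    hess w x a b = hess w x b a := by
  have := (hw.contDiffAt (x := x)).isSymmSndFDerivAt (by simp)
  exact this a b

/-- second-order integration by parts -/
lemma ibp2 {w : Euc d → ℝ} (hw : ContDiff ℝ 2 w) {ψ : Euc d → G}
    (hψ : ContDiff ℝ ∞ ψ) (hc : HasCompactSupport ψ) (y a b : Euc d) (s : ℝ) :
    ∫ z, w (y + s • z) • fderiv ℝ (fderiv ℝ ψ) z a b
      = s ^ 2 • ∫ z, (hess w (y + s • z) a b) • ψ z := by
  have hd1 : ContDiff ℝ ∞ (fun z => fderiv ℝ ψ z b) :=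
    (hψ.fderiv_right (m := ∞) (by norm_num)).clm_apply contDiff_const
  have e : ∀ z, fderiv ℝ (fderiv ℝ ψ) z a b = fderiv ℝ (fun z => fderiv ℝ ψ z b) z a := by
    intro z
    have h : DifferentiableAt ℝ (fderiv ℝ ψ) z :=
      (hψ.fderiv_right (m := ∞) (by norm_num)).differentiable (by simp) z
    have := (h.hasFDerivAt.clm_apply (hasFDerivAt_const b z)).fderiv
    rw [this]; simp
  simp_rw [e]
  rw [ibp (hw.of_le (by norm_num)) (hd1.of_le (by norm_num)) (hc.fderiv_apply ℝ b)]
  rw [ibp (contDiff_fderiv_apply hw a) (hψ.of_le (by norm_num)) hc]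
  simp_rw [hess_apply hw]
  simp_rw [fun x => hess_symm hw x b a]
  rw [smul_neg, neg_neg, smul_smul, sq]

end Kernel
section PairSec
open scoped ContDiff

variable {d : ℕ} {G : Type*} [NormedAddCommGroup G] [NormedSpace ℝ G]

/-- standard basis vector -/
noncomputable abbrev bvec (i : Fin d) : Euc d := EuclideanSpace.single i (1 : ℝ)

/-- a pair of kernels `φ, χ` with `(k+d) φ + z·∇φ = tr (A D²χ)`. -/
structure KPair (A : Euc d →L[ℝ] Euc d) (k : ℕ) (ρ : ℝ) (φ χ : Euc d → G) : Prop where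
  cφ : ContDiff ℝ ∞ φ
  cχ : ContDiff ℝ ∞ χ
  sφ : tsupport φ ⊆ closedBall 0 ρ
  sχ : tsupport χ ⊆ closedBall 0 ρ
  eqn : ∀ z, ((k : ℝ) + d) • φ z + fderiv ℝ φ z z
    = ∑ i : Fin d, fderiv ℝ (fderiv ℝ χ) z (A (bvec i)) (bvec i)

lemma cpt_of_sub {ρ : ℝ} {φ : Euc d → G} (h : tsupport φ ⊆ closedBall 0 ρ) :
    HasCompactSupport φ :=
  (isCompact_closedBall (0 : Euc d) ρ).of_isClosed_subset (isClosed_tsupport φ) h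

lemma fderiv_fderiv_apply' {F : Type*} [NormedAddCommGroup F] [NormedSpace ℝ F]
    {ψ : Euc d → Euc d →L[ℝ] F} (hψ : ContDiff ℝ ∞ ψ) (z a b : Euc d) :
    fderiv ℝ (fun z => ψ z b) z a = fderiv ℝ ψ z a b := by
  have h : DifferentiableAt ℝ ψ z := hψ.differentiable (by simp) z
  have := (h.hasFDerivAt.clm_apply (hasFDerivAt_const b z)).fderiv
  rw [this]; simp

lemma symm2 {ψ : Euc d → G} (hψ : ContDiff ℝ ∞ ψ) (z a b : Euc d) :
    fderiv ℝ (fderiv ℝ ψ) z a b = fderiv ℝ (fderiv ℝ ψ) z b a :=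
  ((contDiff_infty.1 hψ 2).contDiffAt (x := z)).isSymmSndFDerivAt (by simp) a b

lemma cfd {F : Type*} [NormedAddCommGroup F] [NormedSpace ℝ F] {ψ : Euc d → F}
    (hψ : ContDiff ℝ ∞ ψ) : ContDiff ℝ ∞ (fderiv ℝ ψ) :=
  hψ.fderiv_right (m := ∞) (by norm_num)

lemma KPair.succ {A : Euc d →L[ℝ] Euc d} {k : ℕ} {ρ : ℝ} {φ χ : Euc d → G}
    (h : KPair A k ρ φ χ) : KPair A (k + 1) ρ (fderiv ℝ φ) (fderiv ℝ χ) where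
  cφ := cfd h.cφ
  cχ := cfd h.cχ
  sφ := (tsupport_fderiv_subset ℝ).trans h.sφ
  sχ := (tsupport_fderiv_subset ℝ).trans h.sχ
  eqn := by
    intro z
    ext v
    have hfun : (fun z => ((k : ℝ) + d) • φ z + fderiv ℝ φ z z)
      = fun z => ∑ i : Fin d, fderiv ℝ (fderiv ℝ χ) z (A (bvec i)) (bvec i) := funext h.eqn
    have hdφ : HasFDerivAt φ (fderiv ℝ φ z) z := (h.cφ.differentiable (by simp) z).hasFDerivAt
    have hddφ : HasFDerivAt (fderiv ℝ φ) (fderiv ℝ (fderiv ℝ φ) z) z :=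
      ((cfd h.cφ).differentiable (by simp) z).hasFDerivAt
    have hl := (hdφ.const_smul ((k : ℝ) + d)).add (hddφ.clm_apply (hasFDerivAt_id z))
    have hr : HasFDerivAt
        (fun z => ∑ i : Fin d, fderiv ℝ (fderiv ℝ χ) z (A (bvec i)) (bvec i))
        (∑ i : Fin d, fderiv ℝ (fun z => fderiv ℝ (fderiv ℝ χ) z (A (bvec i)) (bvec i)) z) z := by
      refine HasFDerivAt.fun_sum fun i _ => ?_
      have : ContDiff ℝ ∞ (fun z => fderiv ℝ (fderiv ℝ χ) z (A (bvec i)) (bvec i)) :=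
        ((cfd (cfd h.cχ)).clm_apply contDiff_const).clm_apply contDiff_const
      exact (this.differentiable (by simp) z).hasFDerivAt
    have hfun' : ((fun z => ((k : ℝ) + d) • φ z) + fun z => (fderiv ℝ φ z) (id z)) =
      fun z => ∑ i : Fin d, fderiv ℝ (fderiv ℝ χ) z (A (bvec i)) (bvec i) := hfun
    have hl' := hl
    first
      | rw [hfun'] at hl'
      | (change HasFDerivAt ((fun z => ((k : ℝ) + d) • φ z) + fun z => (fderiv ℝ φ z) (id z)) _ _ at hl'
         rw [hfun'] at hl')
    have key := congrArg (fun L : Euc d →L[ℝ] G => L v) (hl'.unique hr)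
    simp only [_root_.add_apply, _root_.smul_apply,
      _root_.sum_apply, ContinuousLinearMap.comp_apply,
      ContinuousLinearMap.flip_apply, ContinuousLinearMap.id_apply, id] at key
    simp only [_root_.add_apply, _root_.smul_apply,
      _root_.sum_apply]
    have e : ∀ i : Fin d, fderiv ℝ (fun z => fderiv ℝ (fderiv ℝ χ) z (A (bvec i)) (bvec i)) z v
        = fderiv ℝ (fderiv ℝ (fderiv ℝ χ)) z (A (bvec i)) (bvec i) v := by
      intro i
      rw [fderiv_fderiv_apply' (ψ := fun z => fderiv ℝ (fderiv ℝ χ) z (A (bvec i)))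
        ((cfd (cfd h.cχ)).clm_apply contDiff_const),
        fderiv_fderiv_apply' (cfd (cfd h.cχ)), symm2 (cfd h.cχ)]
      have hs : (fun z => fderiv ℝ (fderiv ℝ χ) z v (bvec i))
        = fun z => fderiv ℝ (fderiv ℝ χ) z (bvec i) v := funext fun z => symm2 h.cχ z _ _
      have := congrArg (fun f => fderiv ℝ f z (A (bvec i))) hs
      rwa [fderiv_fderiv_apply' (ψ := fun z => fderiv ℝ (fderiv ℝ χ) z v)
        ((cfd (cfd h.cχ)).clm_apply contDiff_const),
        fderiv_fderiv_apply' (cfd (cfd h.cχ)),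
        fderiv_fderiv_apply' (ψ := fun z => fderiv ℝ (fderiv ℝ χ) z (bvec i))
        ((cfd (cfd h.cχ)).clm_apply contDiff_const),
        fderiv_fderiv_apply' (cfd (cfd h.cχ))] at this
    simp_rw [e] at key
    rw [← key, symm2 h.cφ z z v]
    push_cast
    module

lemma sum_bvec (z : Euc d) : ∑ i : Fin d, z i • bvec i = z := by
  have := (EuclideanSpace.basisFun (Fin d) ℝ).sum_repr z
  simpa using this

lemma lin_expand (L : Euc d →L[ℝ] G) (z : Euc d) : L z = ∑ i : Fin d, z i • L (bvec i) := by
  conv_lhs => rw [← sum_bvec z]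
  simp only [map_sum, map_smul]

lemma KPair.hasDerivAt {A : Euc d →L[ℝ] Euc d} {k : ℕ} {ρ : ℝ} {φ χ : Euc d → G}
    (h : KPair A k ρ φ χ) {w : Euc d → ℝ} (hw : ContDiff ℝ 2 w) (y : Euc d) {s : ℝ}
    (hs : 0 < s) :
    HasDerivAt (fun s : ℝ => (s ^ k)⁻¹ • ∫ z, w (y + s • z) • φ z)
      (-((s ^ k)⁻¹ * s) • ∫ z, (∑ i : Fin d, hess w (y + s • z) (A (bvec i)) (bvec i)) • χ z) s := by
  have hw1 : ContDiff ℝ 1 w := hw.of_le (by norm_num)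
  have hcφ := cpt_of_sub h.sφ
  have hcχ := cpt_of_sub h.sχ
  have h1 : HasDerivAt (fun s : ℝ => ∫ z, w (y + s • z) • φ z)
      (∫ z, (fderiv ℝ w (y + s • z) z) • φ z) s := by
    simpa using hasDerivAt_I hw1 h.cφ.continuous hcφ y 0 0 1 s
  have h2 : HasDerivAt (fun s : ℝ => (s ^ k)⁻¹) (-(k * (s ^ k)⁻¹ * s⁻¹)) s := by
    have := (hasDerivAt_pow k s).inv (pow_ne_zero k hs.ne')
    have e : -(k * (s ^ k)⁻¹ * s⁻¹) = -(k * s ^ (k - 1)) / (s ^ k) ^ 2 := by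
      rcases k with _ | k
      · simp
      · simp only [Nat.add_sub_cancel]; field_simp; ring
    rw [e]; exact this
  have hcw : Continuous (fun z : Euc d => w (y + s • z)) := hw.continuous.comp (by fun_prop)
  have hcdw : Continuous (fun z : Euc d => fderiv ℝ w (y + s • z)) :=
    (hw1.continuous_fderiv one_ne_zero).comp (by fun_prop)
  -- first integration by parts
  have h3 : s • ∫ z, (fderiv ℝ w (y + s • z) z) • φ z
      = - ∫ z, w (y + s • z) • ((d : ℝ) • φ z + fderiv ℝ φ z z) := by
    have e1 : ∀ z, (fderiv ℝ w (y + s • z) z) • φ z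
        = ∑ i : Fin d, (fderiv ℝ w (y + s • z) (bvec i)) • (z i • φ z) := by
      intro z
      rw [lin_expand (fderiv ℝ w (y + s • z)) z]
      simp only [Finset.sum_smul, smul_smul, smul_eq_mul]
      exact Finset.sum_congr rfl fun i _ => by rw [mul_comm]
    have cψ : ∀ i : Fin d, ContDiff ℝ ∞ (fun z : Euc d => z i • φ z) := fun i =>
      ContDiff.smul (by fun_prop) h.cφ
    have sψ : ∀ i : Fin d, HasCompactSupport (fun z : Euc d => z i • φ z) := fun i =>
      hcφ.smul_left
    have dψ : ∀ (i : Fin d) z, fderiv ℝ (fun z : Euc d => z i • φ z) z (bvec i)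
        = φ z + z i • fderiv ℝ φ z (bvec i) := by
      intro i z
      have a1 : HasFDerivAt (fun z : Euc d => z i) (EuclideanSpace.proj i : Euc d →L[ℝ] ℝ) z :=
        (EuclideanSpace.proj i : Euc d →L[ℝ] ℝ).hasFDerivAt
      have := (a1.smul (h.cφ.differentiable (by simp) z).hasFDerivAt).fderiv
      change fderiv ℝ ((fun z : Euc d => z i) • φ) z (bvec i) = _
      rw [this]
      simp [add_comm]
    have e2 : ∀ z, w (y + s • z) • ((d : ℝ) • φ z + fderiv ℝ φ z z)
        = ∑ i : Fin d, w (y + s • z) • fderiv ℝ (fun z : Euc d => z i • φ z) z (bvec i) := by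
      intro z
      simp_rw [dψ]
      rw [← Finset.smul_sum, Finset.sum_add_distrib]
      congr 2
      · simp [← Nat.cast_smul_eq_nsmul ℝ]
      · exact lin_expand _ z
    simp_rw [e1, e2]
    rw [integral_finsetSum, integral_finsetSum, Finset.smul_sum, ← Finset.sum_neg_distrib]
    · refine Finset.sum_congr rfl fun i _ => ?_
      rw [ibp hw1 ((cψ i).of_le (by norm_num)) (sψ i), neg_neg]
    · intro i _
      exact integrable_smul_cpt hcw ((cfd (cψ i)).continuous.clm_apply continuous_const)
        ((sψ i).fderiv_apply ℝ _)
    · intro i _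
      exact integrable_smul_cpt (hcdw.clm_apply continuous_const) (cψ i).continuous (sψ i)
  have h4 : ∫ z, w (y + s • z) • (∑ i : Fin d, fderiv ℝ (fderiv ℝ χ) z (A (bvec i)) (bvec i))
      = s ^ 2 • ∫ z, (∑ i : Fin d, hess w (y + s • z) (A (bvec i)) (bvec i)) • χ z := by
    have hch : Continuous (fun z : Euc d => hess w (y + s • z)) :=
      ((hw.fderiv_right (m := 1) (by norm_num)).continuous_fderiv one_ne_zero).comp (by fun_prop)
    simp_rw [Finset.smul_sum, Finset.sum_smul]
    rw [integral_finsetSum, integral_finsetSum, Finset.smul_sum]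
    · exact Finset.sum_congr rfl fun i _ => ibp2 hw h.cχ hcχ y _ _ s
    · intro i _
      exact integrable_smul_cpt ((hch.clm_apply continuous_const).clm_apply continuous_const)
        h.cχ.continuous hcχ
    · intro i _
      exact integrable_smul_cpt hcw
        (((cfd (cfd h.cχ)).continuous.clm_apply continuous_const).clm_apply continuous_const)
        ((hcχ.fderiv ℝ).fderiv_apply ℝ _ |>.comp_left (g := fun L : Euc d →L[ℝ] G => L (bvec i))
          (by simp))
  have h5 : ∫ z, w (y + s • z) • (∑ i : Fin d, fderiv ℝ (fderiv ℝ χ) z (A (bvec i)) (bvec i))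
      = (k : ℝ) • (∫ z, w (y + s • z) • φ z)
        + ∫ z, w (y + s • z) • ((d : ℝ) • φ z + fderiv ℝ φ z z) := by
    rw [← integral_smul, ← integral_add]
    · refine integral_congr_ae (Eventually.of_forall fun z => ?_)
      simp only
      rw [← h.eqn z]
      module
    · exact (integrable_smul_cpt hcw h.cφ.continuous hcφ).smul _
    · refine integrable_smul_cpt hcw ?_ ?_
      · exact (h.cφ.continuous.const_smul _).add ((cfd h.cφ).continuous.clm_apply continuous_id)
      · refine HasCompactSupport.add ?_ ?_
        · exact hcφ.smul_left (f := fun _ => (d : ℝ))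
        · refine (hcφ.fderiv ℝ).mono ?_
          intro z hz
          simp only [Function.mem_support] at hz ⊢
          intro h0; exact hz (by rw [h0]; simp)
  have h6 := h2.smul h1
  rw [h5] at h4
  have h7 : ∫ z, (fderiv ℝ w (y + s • z) z) • φ z
      = s⁻¹ • - ∫ z, w (y + s • z) • ((d : ℝ) • φ z + fderiv ℝ φ z z) := by
    rw [← h3, smul_smul, inv_mul_cancel₀ hs.ne', one_smul]
  have h8 : (∫ z, (∑ i : Fin d, hess w (y + s • z) (A (bvec i)) (bvec i)) • χ z)
      = (s ^ 2)⁻¹ • ((k : ℝ) • (∫ z, w (y + s • z) • φ z)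
        + ∫ z, w (y + s • z) • ((d : ℝ) • φ z + fderiv ℝ φ z z)) := by
    rw [h4, smul_smul, inv_mul_cancel₀ (by positivity), one_smul]
  refine h6.congr_deriv ?_
  rw [h7, h8]
  match_scalars <;> field_simp

end PairSec
section Base
open scoped ContDiff

variable {d : ℕ}

/-- radial profile -/
noncomputable def hprof (s : ℝ) : ℝ := Real.smoothTransition (2 - 2 * s)

/-- primitive of the radial profile -/
noncomputable def Hprof (s : ℝ) : ℝ := ∫ t in (1 : ℝ)..s, hprof t

lemma hprof_contDiff : ContDiff ℝ ∞ hprof :=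
  (Real.smoothTransition.contDiff (n := ⊤)).comp (by fun_prop : ContDiff ℝ ∞ fun s : ℝ => 2 - 2 * s)

lemma hprof_zero {s : ℝ} (hs : 1 ≤ s) : hprof s = 0 :=
  Real.smoothTransition.zero_of_nonpos (by linarith)

lemma hprof_nonneg (s : ℝ) : 0 ≤ hprof s := Real.smoothTransition.nonneg _
lemma hprof_le_one (s : ℝ) : hprof s ≤ 1 := Real.smoothTransition.le_one _
lemma hprof_at_zero : hprof 0 = 1 := Real.smoothTransition.one_of_one_le (by norm_num)

lemma hasDerivAt_Hprof (s : ℝ) : HasDerivAt Hprof (hprof s) s :=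
  intervalIntegral.integral_hasDerivAt_right
    (hprof_contDiff.continuous.intervalIntegrable _ _)
    (hprof_contDiff.continuous.stronglyMeasurableAtFilter _ _) hprof_contDiff.continuous.continuousAt

lemma Hprof_contDiff : ContDiff ℝ ∞ Hprof := by
  rw [contDiff_infty_iff_deriv]
  refine ⟨fun s => (hasDerivAt_Hprof s).differentiableAt, ?_⟩
  have : deriv Hprof = hprof := funext fun s => (hasDerivAt_Hprof s).deriv
  rw [this]; exact hprof_contDiff

lemma Hprof_zero {s : ℝ} (hs : 1 ≤ s) : Hprof s = 0 := by
  have : ∫ t in (1 : ℝ)..s, hprof t = ∫ t in (1 : ℝ)..s, (0 : ℝ) := by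
    refine intervalIntegral.integral_congr fun t ht => ?_
    rw [Set.uIcc_of_le hs] at ht
    exact hprof_zero ht.1
  rw [Hprof, this]; simp

lemma exists_hprof_lip : ∃ L : ℝ, 0 ≤ L ∧ (∀ s, 0 ≤ s → |deriv hprof s| ≤ L) ∧
    (∀ s, 1 < s → deriv hprof s = 0) ∧
    ∀ s t, 0 ≤ s → 0 ≤ t → |hprof s - hprof t| ≤ L * |s - t| := by
  obtain ⟨L, hL⟩ := (isCompact_Icc (a := (0 : ℝ)) (b := 1)).exists_bound_of_continuousOn
    ((hprof_contDiff.continuous_deriv (by simp)).continuousOn)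
  have h0 : ∀ s, 1 < s → deriv hprof s = 0 := by
    intro s hs
    have : hprof =ᶠ[𝓝 s] fun _ => 0 := by
      filter_upwards [lt_mem_nhds hs] with t ht using hprof_zero ht.le
    rw [this.deriv_eq]; simp
  have hL0 : 0 ≤ L := (norm_nonneg _).trans (hL 0 (by simp))
  have hb : ∀ s, 0 ≤ s → |deriv hprof s| ≤ L := by
    intro s hs
    rcases le_or_gt s 1 with h | h
    · exact hL s ⟨hs, h⟩
    · rw [h0 s h]; simpa using hL0
  refine ⟨L, hL0, hb, h0, ?_⟩
  intro s t hs ht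
  have := (convex_Ici (0 : ℝ)).norm_image_sub_le_of_norm_deriv_le (f := hprof) (C := L)
    (fun x _ => hprof_contDiff.differentiable (by simp) x) (fun x hx => hb x hx) ht hs
  simpa using this

/-- kernel φ -/
noncomputable def phiB (B : Euc d →L[ℝ] Euc d) (z : Euc d) : ℝ := hprof ⟪B z, z⟫
/-- kernel χ -/
noncomputable def chiB (B : Euc d →L[ℝ] Euc d) (z : Euc d) : ℝ := (1 / 2) * Hprof ⟪B z, z⟫

/-- `B` is the inverse of the symmetric matrix `A`, with bounds. -/
structure GoodInv (A B : Euc d →L[ℝ] Euc d) (β ρ : ℝ) : Prop where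
  AB : ∀ z, A (B z) = z
  BA : ∀ z, B (A z) = z
  symm : ∀ x y, ⟪B x, y⟫ = ⟪x, B y⟫
  nrm : ‖B‖ ≤ β
  ell : ∀ z, ‖z‖ ^ 2 ≤ ρ ^ 2 * ⟪B z, z⟫

lemma quad_hasFDerivAt {B : Euc d →L[ℝ] Euc d} (hs : ∀ x y, ⟪B x, y⟫ = ⟪x, B y⟫) (z : Euc d) :
    HasFDerivAt (fun z => ⟪B z, z⟫) ((2 : ℝ) • innerSL ℝ (B z)) z := by
  have := (B.hasFDerivAt (x := z)).inner ℝ (hasFDerivAt_id z)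
  refine this.congr_fderiv ?_
  ext v
  simp [fderivInnerCLM_apply]
  rw [hs v z, real_inner_comm]; ring

lemma quad_contDiff (B : Euc d →L[ℝ] Euc d) : ContDiff ℝ ∞ (fun z => ⟪B z, z⟫) :=
  B.contDiff.inner ℝ contDiff_id

lemma phiB_contDiff (B : Euc d →L[ℝ] Euc d) : ContDiff ℝ ∞ (phiB B) :=
  hprof_contDiff.comp (quad_contDiff B)

lemma chiB_contDiff (B : Euc d →L[ℝ] Euc d) : ContDiff ℝ ∞ (chiB B) :=
  contDiff_const.mul (Hprof_contDiff.comp (quad_contDiff B))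

lemma fderiv_phiB {B : Euc d →L[ℝ] Euc d} (hs : ∀ x y, ⟪B x, y⟫ = ⟪x, B y⟫) (z : Euc d) :
    HasFDerivAt (phiB B) ((deriv hprof ⟪B z, z⟫ * 2) • innerSL ℝ (B z)) z := by
  have h1 : HasDerivAt hprof (deriv hprof ⟪B z, z⟫) ⟪B z, z⟫ :=
    (hprof_contDiff.differentiable (by simp) _).hasDerivAt
  have := HasDerivAt.comp_hasFDerivAt (f := fun z : Euc d => ⟪B z, z⟫) z h1 (quad_hasFDerivAt hs z)
  rw [smul_smul] at this
  exact this

lemma fderiv_chiB {B : Euc d →L[ℝ] Euc d} (hs : ∀ x y, ⟪B x, y⟫ = ⟪x, B y⟫) (z : Euc d) :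
    HasFDerivAt (chiB B) (phiB B z • innerSL ℝ (B z)) z := by
  have := ((hasDerivAt_Hprof _).comp_hasFDerivAt z (quad_hasFDerivAt hs z)).const_mul (1 / 2)
  refine this.congr_fderiv ?_
  rw [smul_smul, smul_smul, phiB]
  congr 1; ring

lemma fderiv2_chiB {B : Euc d →L[ℝ] Euc d} (hs : ∀ x y, ⟪B x, y⟫ = ⟪x, B y⟫) (z a v : Euc d) :
    fderiv ℝ (fderiv ℝ (chiB B)) z a v
      = (deriv hprof ⟪B z, z⟫ * 2) * ⟪B z, a⟫ * ⟪B z, v⟫ + phiB B z * ⟪B a, v⟫ := by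
  have e : fderiv ℝ (chiB B) = fun z => phiB B z • innerSL ℝ (B z) :=
    funext fun z => (fderiv_chiB hs z).fderiv
  have h1 : HasFDerivAt (fun z => innerSL ℝ (B z)) ((innerSL ℝ).comp B) z :=
    ((innerSL ℝ).comp B).hasFDerivAt
  have h2 := ((fderiv_phiB hs z).smul h1).fderiv
  rw [e]
  change fderiv ℝ (phiB B • fun z => innerSL ℝ (B z)) z a v = _
  rw [h2]
  simp
  ring

lemma phiB_zero {A B : Euc d →L[ℝ] Euc d} {β ρ : ℝ} (hB : GoodInv A B β ρ) (hρ : 0 < ρ)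
    {z : Euc d} (hz : ρ < ‖z‖) : 1 < ⟪B z, z⟫ := by
  have := hB.ell z
  have h2 : ρ ^ 2 < ‖z‖ ^ 2 := by gcongr
  by_contra h
  push Not at h
  nlinarith [sq_nonneg ρ]

lemma KPair_base {A B : Euc d →L[ℝ] Euc d} {β ρ : ℝ} (hB : GoodInv A B β ρ) (hρ : 0 < ρ) :
    KPair A 0 ρ (phiB B) (chiB B) where
  cφ := phiB_contDiff B
  cχ := chiB_contDiff B
  sφ := by
    refine closure_minimal (fun z hz => ?_) isClosed_closedBall
    rw [mem_closedBall_zero_iff]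
    by_contra h
    exact hz (hprof_zero (phiB_zero hB hρ (not_le.1 h)).le)
  sχ := by
    refine closure_minimal (fun z hz => ?_) isClosed_closedBall
    rw [mem_closedBall_zero_iff]
    by_contra h
    refine hz ?_
    simp only [chiB]
    rw [Hprof_zero (phiB_zero hB hρ (not_le.1 h)).le, mul_zero]
  eqn := by
    intro z
    simp_rw [fderiv2_chiB hB.symm, (fderiv_phiB hB.symm z).fderiv, hB.BA]
    rw [Finset.sum_add_distrib, ← Finset.mul_sum]
    have e1 : ∑ i : Fin d, ⟪bvec i, bvec i⟫ = (d : ℝ) := by simp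
    have e2 : ∑ i : Fin d, deriv hprof ⟪B z, z⟫ * 2 * ⟪B z, A (bvec i)⟫ * ⟪B z, bvec i⟫
        = deriv hprof ⟪B z, z⟫ * 2 * ⟪B z, z⟫ := by
      have e3 := lin_expand ((innerSL ℝ (B z)).comp A) (B z)
      simp only [ContinuousLinearMap.comp_apply, innerSL_apply_apply, hB.AB] at e3
      rw [e3, Finset.mul_sum]
      refine Finset.sum_congr rfl fun i _ => ?_
      have : ⟪B z, bvec i⟫ = (B z) i := by simp [EuclideanSpace.inner_single_right]
      rw [this, smul_eq_mul, ← e3]; ring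
    rw [e1, e2]
    simp
    ring

lemma chiB_bound {L : ℝ} (hL0 : 0 ≤ L) (hL : ∀ s, 0 ≤ s → |deriv hprof s| ≤ L)
    (hL1 : ∀ s, 1 < s → deriv hprof s = 0)
    {A B : Euc d →L[ℝ] Euc d} {β ρ : ℝ} (hB : GoodInv A B β ρ) (hρ : 0 < ρ) (z : Euc d) :
    ‖fderiv ℝ (fderiv ℝ (chiB B)) z‖ ≤ 2 * L * (β * ρ) ^ 2 + β := by
  have hβ : 0 ≤ β := (norm_nonneg _).trans hB.nrm
  have hBz : ∀ x : Euc d, ‖B x‖ ≤ β * ‖x‖ := fun x => B.le_of_opNorm_le hB.nrm x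
  refine ContinuousLinearMap.opNorm_le_bound _ (by positivity) fun a => ?_
  refine ContinuousLinearMap.opNorm_le_bound _ (by positivity) fun v => ?_
  rw [fderiv2_chiB hB.symm]
  have hQ : 0 ≤ ⟪B z, z⟫ := by
    have := hB.ell z
    by_contra h
    push Not at h
    nlinarith [sq_nonneg ‖z‖, mul_pos hρ hρ]
  have h2 : |phiB B z * ⟪B a, v⟫| ≤ β * ‖a‖ * ‖v‖ := by
    rw [abs_mul]
    have a1 : |phiB B z| ≤ 1 := by
      rw [phiB, abs_of_nonneg (hprof_nonneg _)]; exact hprof_le_one _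
    have a2 : |⟪B a, v⟫| ≤ β * ‖a‖ * ‖v‖ :=
      (abs_real_inner_le_norm _ _).trans (by gcongr; exact hBz a)
    calc _ ≤ 1 * (β * ‖a‖ * ‖v‖) := by gcongr
      _ = _ := one_mul _
  have h1 : |(deriv hprof ⟪B z, z⟫ * 2) * ⟪B z, a⟫ * ⟪B z, v⟫|
      ≤ 2 * L * (β * ρ) ^ 2 * ‖a‖ * ‖v‖ := by
    rcases le_or_gt ‖z‖ ρ with hz | hz
    · have b1 : ∀ x : Euc d, |⟪B z, x⟫| ≤ (β * ρ) * ‖x‖ := fun x =>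
        (abs_real_inner_le_norm _ _).trans (by
          gcongr
          exact (hBz z).trans (by gcongr))
      rw [abs_mul, abs_mul, abs_mul]
      calc _ ≤ (L * |2|) * ((β * ρ) * ‖a‖) * ((β * ρ) * ‖v‖) := by
            gcongr
            · exact hL _ hQ
            · exact b1 a
            · exact b1 v
        _ = _ := by rw [abs_of_pos (by norm_num : (0 : ℝ) < 2)]; ring
    · rw [hL1 _ (phiB_zero hB hρ hz)]; simp; positivity
  rw [Real.norm_eq_abs]
  refine (abs_add_le _ _).trans ?_
  calc _ ≤ 2 * L * (β * ρ) ^ 2 * ‖a‖ * ‖v‖ + β * ‖a‖ * ‖v‖ := add_le_add h1 h2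
    _ = _ := by ring

lemma GoodInv.nonneg {A B : Euc d →L[ℝ] Euc d} {β ρ : ℝ} (hB : GoodInv A B β ρ) (hρ : 0 < ρ)
    (z : Euc d) : 0 ≤ ⟪B z, z⟫ := by
  have := hB.ell z
  by_contra h
  push Not at h
  nlinarith [sq_nonneg ‖z‖, mul_pos hρ hρ]

lemma phiB_lip {L : ℝ} (hL0 : 0 ≤ L)
    (hL : ∀ s t, 0 ≤ s → 0 ≤ t → |hprof s - hprof t| ≤ L * |s - t|)
    {A B A' B' : Euc d →L[ℝ] Euc d} {β ρ : ℝ} (hB : GoodInv A B β ρ) (hB' : GoodInv A' B' β ρ)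
    (hρ : 0 < ρ) (z : Euc d) :
    |phiB B z - phiB B' z| ≤ L * (β ^ 2 * ‖A - A'‖ * ‖z‖ ^ 2) := by
  have hβ : 0 ≤ β := (norm_nonneg _).trans hB.nrm
  refine (hL _ _ (hB.nonneg hρ z) (hB'.nonneg hρ z)).trans ?_
  gcongr
  have e : ⟪B z, z⟫ - ⟪B' z, z⟫ = ⟪B ((A' - A) (B' z)), z⟫ := by
    rw [← inner_sub_left]
    congr 1
    simp [hB'.AB, hB.BA]
  rw [e]
  refine (abs_real_inner_le_norm _ _).trans ?_
  have h1 : ‖B ((A' - A) (B' z))‖ ≤ β * (‖A - A'‖ * (β * ‖z‖)) := by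
    refine (B.le_of_opNorm_le hB.nrm _).trans ?_
    gcongr
    refine ((A' - A).le_opNorm _).trans ?_
    rw [norm_sub_rev]
    gcongr
    exact B'.le_of_opNorm_le hB'.nrm _
  calc _ ≤ β * (‖A - A'‖ * (β * ‖z‖)) * ‖z‖ := by gcongr
    _ = _ := by ring

lemma exists_goodInv {A : Euc d →L[ℝ] Euc d} {lam Θ : ℝ} (hlam : 0 < lam)
    (hs : ∀ x y, ⟪A x, y⟫ = ⟪x, A y⟫) (hc : ∀ x, lam * ‖x‖ ^ 2 ≤ ⟪A x, x⟫) (hΘ : ‖A‖ ≤ Θ) :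
    ∃ B, GoodInv A B lam⁻¹ (Θ / Real.sqrt lam) := by
  have hlow : ∀ x, lam * ‖x‖ ≤ ‖A x‖ := by
    intro x
    rcases eq_or_ne x 0 with rfl | hx
    · simp
    · have h1 := (hc x).trans (real_inner_le_norm _ _)
      have : 0 < ‖x‖ := norm_pos_iff.2 hx
      nlinarith
  have hinj : Function.Injective (A : Euc d →ₗ[ℝ] Euc d) := by
    rw [← LinearMap.ker_eq_bot, LinearMap.ker_eq_bot']
    intro x hx
    have h1 := hlow x
    have h2 : A x = 0 := hx
    rw [h2, norm_zero] at h1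
    have : ‖x‖ ≤ 0 := by by_contra h; push Not at h; nlinarith
    exact norm_le_zero_iff.1 this
  let e := LinearEquiv.ofInjectiveEndo (A : Euc d →ₗ[ℝ] Euc d) hinj
  let B : Euc d →L[ℝ] Euc d := LinearMap.toContinuousLinearMap (e.symm : Euc d →ₗ[ℝ] Euc d)
  have AB : ∀ z, A (B z) = z := fun z => e.apply_symm_apply z
  have BA : ∀ z, B (A z) = z := fun z => e.symm_apply_apply z
  refine ⟨B, AB, BA, ?_, ?_, ?_⟩
  · intro x y
    conv_lhs => rw [← AB y]
    conv_rhs => rw [← AB x]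
    rw [← hs, hs]
  · refine ContinuousLinearMap.opNorm_le_bound _ (by positivity) fun z => ?_
    have := hlow (B z)
    rw [AB] at this
    rw [inv_mul_eq_div, le_div_iff₀ hlam]; linarith
  · intro z
    have h1 := hc (B z)
    rw [AB] at h1
    have h2 : ‖z‖ ≤ Θ * ‖B z‖ := by
      conv_lhs => rw [← AB z]
      exact A.le_of_opNorm_le hΘ _
    rw [div_pow, Real.sq_sqrt hlam.le, real_inner_comm]
    calc ‖z‖ ^ 2 ≤ (Θ * ‖B z‖) ^ 2 := by gcongr
      _ = Θ ^ 2 / lam * (lam * ‖B z‖ ^ 2) := by field_simp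
      _ ≤ _ := by gcongr

end Base
section Generic
open scoped ContDiff

variable {d : ℕ} {G : Type*} [NormedAddCommGroup G] [NormedSpace ℝ G]

lemma integrable_cd {w : Euc d → ℝ} (hw : Continuous w) {K : Euc d → G}
    (hK : ContDiff ℝ ∞ K) (hc : HasCompactSupport K) : Integrable (fun z => w z • K z) :=
  integrable_smul_cpt hw hK.continuous hc

lemma integral_cd_sub {w w' : Euc d → ℝ} (hw : Continuous w) (hw' : Continuous w')
    {K : Euc d → G} (hK : ContDiff ℝ ∞ K) (hc : HasCompactSupport K) :
    ∫ z, (w z - w' z) • K z = (∫ z, w z • K z) - ∫ z, w' z • K z := by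
  simp_rw [sub_smul]
  exact integral_sub (integrable_cd hw hK hc) (integrable_cd hw' hK hc)

lemma integral_cd_apply {w : Euc d → ℝ} (hw : Continuous w) {K : Euc d → Euc d →L[ℝ] G}
    (hK : ContDiff ℝ ∞ K) (hc : HasCompactSupport K) (a : Euc d) :
    (∫ z, w z • K z) a = ∫ z, w z • K z a := by
  rw [ContinuousLinearMap.integral_apply (integrable_cd hw hK hc)]
  rfl

lemma integral_cd_apply2 {w : Euc d → ℝ} (hw : Continuous w)
    {K : Euc d → Euc d →L[ℝ] Euc d →L[ℝ] G}
    (hK : ContDiff ℝ ∞ K) (hc : HasCompactSupport K) (a b : Euc d) :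
    (∫ z, w z • K z) a b = ∫ z, w z • K z a b := by
  rw [integral_cd_apply hw hK hc a, integral_cd_apply (K := fun z => K z a) hw
    (hK.clm_apply contDiff_const)]
  exact hc.comp_left (g := fun T : Euc d →L[ℝ] Euc d →L[ℝ] G => T a) rfl

lemma hess_cont {u : Euc d → ℝ} (hu : ContDiff ℝ 2 u) : Continuous (hess u) :=
  (hu.fderiv_right (m := 1) (by norm_num)).continuous_fderiv one_ne_zero

lemma integral_ch_apply {φ : Euc d → ℝ} (hφ : Continuous φ) (hc : HasCompactSupport φ)
    {T : Euc d → Euc d →L[ℝ] G} (hT : Continuous T) (a : Euc d) :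
    (∫ z, φ z • T z) a = ∫ z, φ z • T z a := by
  rw [ContinuousLinearMap.integral_apply]
  · rfl
  · exact (hφ.smul hT).integrable_of_hasCompactSupport hc.smul_right

lemma integral_hess_apply {φ : Euc d → ℝ} (hφ : Continuous φ) (hc : HasCompactSupport φ)
    {T : Euc d → Euc d →L[ℝ] Euc d →L[ℝ] ℝ} (hT : Continuous T) (a b : Euc d) :
    (∫ z, φ z • T z) a b = ∫ z, φ z • T z a b := by
  rw [integral_ch_apply hφ hc hT a, integral_ch_apply (T := fun z => T z a) hφ hc
    (hT.clm_apply continuous_const)]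

lemma affine_kill {ψ : Euc d → G} (hψ : ContDiff ℝ ∞ ψ) (hc : HasCompactSupport ψ)
    (c : ℝ) (l : Euc d →L[ℝ] ℝ) :
    ∫ z, (c + l z) • fderiv ℝ (fderiv ℝ ψ) z = 0 := by
  have hw : ContDiff ℝ 2 (fun z => c + l z) := by fun_prop
  have hcs : HasCompactSupport (fderiv ℝ (fderiv ℝ ψ)) := (hc.fderiv ℝ).fderiv ℝ
  have hh : ∀ x, hess (fun z => c + l z) x = 0 := by
    intro x
    have : (fun y => fderiv ℝ (fun z => c + l z) y) = fun _ => l := by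
      funext y
      exact ((l.hasFDerivAt).const_add c).fderiv
    rw [hess, this]
    simp
  ext a b
  rw [integral_cd_apply2 hw.continuous (cfd (cfd hψ)) hcs a b]
  have := ibp2 hw hψ hc 0 a b 1
  simp only [zero_add, one_smul] at this
  rw [this]
  simp [hh]

lemma norm_integral_ball {w : Euc d → ℝ} {ψ : Euc d → G} {ρ e C : ℝ}
    (hs : tsupport ψ ⊆ closedBall 0 ρ) (he : 0 ≤ e)
    (hw : ∀ z, ‖z‖ ≤ ρ → |w z| ≤ e) (hψ : ∀ z, ‖ψ z‖ ≤ C) :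
    ‖∫ z, w z • ψ z‖ ≤ e * C * (volume (closedBall (0 : Euc d) ρ)).toReal := by
  rw [← setIntegral_eq_integral_of_forall_compl_eq_zero (s := closedBall (0 : Euc d) ρ)]
  · refine norm_setIntegral_le_of_norm_le_const measure_closedBall_lt_top ?_
    intro z hz
    rw [norm_smul, Real.norm_eq_abs]
    have := hw z (by simpa using hz)
    gcongr
    exact hψ z
  · intro z hz
    rw [image_eq_zero_of_notMem_tsupport (fun h => hz (hs h))]
    simp

lemma kill_gen {K : Euc d → G} {ρ e C : ℝ} (hK : ContDiff ℝ ∞ K)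
    (hs : tsupport K ⊆ closedBall 0 ρ) (he : 0 ≤ e)
    (hC : ∀ z, ‖K z‖ ≤ C) {F : Euc d → ℝ} (hF : Continuous F)
    (c : ℝ) (l : Euc d →L[ℝ] ℝ) (h0 : ∫ z, (c + l z) • K z = 0)
    (hFe : ∀ z, ‖z‖ ≤ ρ → |F z - (c + l z)| ≤ e) :
    ‖∫ z, F z • K z‖ ≤ e * C * (volume (closedBall (0 : Euc d) ρ)).toReal := by
  have hc := cpt_of_sub hs
  have : ∫ z, F z • K z = ∫ z, (F z - (c + l z)) • K z := by
    have := integral_cd_sub hF (w' := fun z => c + l z) (by fun_prop) hK hc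
    rw [this, h0, sub_zero]
  rw [this]
  exact norm_integral_ball hs he hFe hC

lemma tsf {ρ : ℝ} {φ : Euc d → G} (h : tsupport φ ⊆ closedBall 0 ρ) :
    tsupport (fderiv ℝ φ) ⊆ closedBall 0 ρ := (tsupport_fderiv_subset ℝ).trans h

lemma kill_bound {ψ : Euc d → G} {ρ e C : ℝ} (hψ : ContDiff ℝ ∞ ψ)
    (hs : tsupport ψ ⊆ closedBall 0 ρ) (he : 0 ≤ e)
    (hC : ∀ z, ‖fderiv ℝ (fderiv ℝ ψ) z‖ ≤ C) {F : Euc d → ℝ} (hF : Continuous F)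
    (c : ℝ) (l : Euc d →L[ℝ] ℝ) (hFe : ∀ z, ‖z‖ ≤ ρ → |F z - (c + l z)| ≤ e) :
    ‖∫ z, F z • fderiv ℝ (fderiv ℝ ψ) z‖
      ≤ e * C * (volume (closedBall (0 : Euc d) ρ)).toReal := by
  have h0 := affine_kill hψ (cpt_of_sub hs) c l
  have hK := cfd (cfd hψ)
  have hs2 := tsf (tsf hs)
  generalize fderiv ℝ (fderiv ℝ ψ) = K at *
  exact kill_gen hK hs2 he hC hF c l h0 hFe

lemma mv_pow {f f' : ℝ → G} {a b D γ : ℝ} (ha : 0 < a) (hab : a ≤ b) (hγ : γ ≠ 0)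
    (hf : ∀ s ∈ Set.Icc a b, HasDerivAt f (f' s) s)
    (hb : ∀ s ∈ Set.Icc a b, ‖f' s‖ ≤ D * s ^ (γ - 1)) :
    ‖f b - f a‖ ≤ D * ((b ^ γ - a ^ γ) / γ) := by
  have key := image_norm_le_of_norm_deriv_right_le_deriv_boundary'
    (f := fun s => f s - f a) (f' := f') (a := a) (b := b)
    (B := fun s => D * ((s ^ γ - a ^ γ) / γ)) (B' := fun s => D * s ^ (γ - 1))
    (fun s hs => ((hf s hs).continuousAt.sub continuousAt_const).continuousWithinAt)
    (fun s hs => ((hf s (Set.Ico_subset_Icc_self hs)).sub_const (f a)).hasDerivWithinAt)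
    (by simp)
    (fun s hs => ?_) (fun s hs => ?_) (fun s hs => hb s (Set.Ico_subset_Icc_self hs))
  · exact key ⟨hab, le_rfl⟩
  · have hs0 : 0 < s := ha.trans_le hs.1
    exact (((Real.continuousAt_rpow_const s γ (Or.inl hs0.ne')).sub
      continuousAt_const).div_const γ |>.const_mul D).continuousWithinAt
  · have hs0 : 0 < s := ha.trans_le hs.1
    have := ((((Real.hasDerivAt_rpow_const (p := γ) (Or.inl hs0.ne')).sub_const
      (a ^ γ)).div_const γ).const_mul D)
    rw [mul_div_cancel_left₀ _ hγ] at this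
    exact this.hasDerivWithinAt

lemma trace_bound (T : Euc d →L[ℝ] Euc d →L[ℝ] ℝ) (C : Euc d →L[ℝ] Euc d) :
    |∑ i : Fin d, T (C (bvec i)) (bvec i)| ≤ d * (‖T‖ * ‖C‖) := by
  refine (Finset.abs_sum_le_sum_abs _ _).trans ?_
  have : ∀ i ∈ (Finset.univ : Finset (Fin d)), |T (C (bvec i)) (bvec i)| ≤ ‖T‖ * ‖C‖ := by
    intro i _
    have hb : ‖(bvec i : Euc d)‖ = 1 := by simp [bvec]
    have h1 := (T (C (bvec i))).le_opNorm (bvec i)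
    have h2 := T.le_opNorm (C (bvec i))
    have h3 := C.le_opNorm (bvec i)
    rw [hb, mul_one] at h1 h3
    rw [← Real.norm_eq_abs]
    calc _ ≤ _ := h1
      _ ≤ _ := h2
      _ ≤ _ := by gcongr
  refine (Finset.sum_le_sum this).trans ?_
  simp

lemma hess_repr {u : Euc d → ℝ} (hu : ContDiff ℝ 2 u) {φ : Euc d → ℝ} (hφ : ContDiff ℝ ∞ φ)
    (hc : HasCompactSupport φ) (y : Euc d) {s : ℝ} (hs : 0 < s) :
    (s ^ 2)⁻¹ • ∫ z, u (y + s • z) • fderiv ℝ (fderiv ℝ φ) z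
      = ∫ z, φ z • hess u (y + s • z) := by
  have hcs : HasCompactSupport (fderiv ℝ (fderiv ℝ φ)) := (hc.fderiv ℝ).fderiv ℝ
  ext a b
  rw [_root_.smul_apply, _root_.smul_apply,
    integral_cd_apply2 (w := fun z => u (y + s • z)) (hu.continuous.comp (by fun_prop))
      (cfd (cfd hφ)) hcs a b,
    integral_hess_apply hφ.continuous hc (T := fun z => hess u (y + s • z))
      ((hess_cont hu).comp (by fun_prop)) a b]
  rw [ibp2 hu hφ hc y a b s, smul_smul, inv_mul_cancel₀ (by positivity), one_smul]
  simp_rw [smul_eq_mul, mul_comm]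

lemma tendsto_gen {φ : Euc d → ℝ} (hφ : Continuous φ) (hc : HasCompactSupport φ)
    {T : Euc d → G} (hT : Continuous T) (y : Euc d) :
    Tendsto (fun s : ℝ => ∫ z, φ z • T (y + s • z)) (𝓝[>] 0) (𝓝 (∫ z, φ z • T y)) := by
  have hcont : Continuous (fun s : ℝ => ∫ z, φ z • T (y + s • z)) := by
    have h1 : ∀ s : ℝ, ∫ z, φ z • T (y + s • z)
        = ∫ z in tsupport φ, φ z • T (y + s • z) := by
      intro s
      rw [setIntegral_eq_integral_of_forall_compl_eq_zero]
      intro z hz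
      rw [image_eq_zero_of_notMem_tsupport hz, zero_smul]
    simp_rw [h1]
    refine continuous_parametric_integral_of_continuous
      (f := fun (s : ℝ) z => φ z • T (y + s • z)) ?_ hc
    exact (hφ.comp continuous_snd).smul (hT.comp (by fun_prop))
  have := (hcont.tendsto 0).mono_left (nhdsWithin_le_nhds (s := Set.Ioi 0))
  simpa using this

lemma hess_repr_tendsto {u : Euc d → ℝ} (hu : ContDiff ℝ 2 u) {φ : Euc d → ℝ}
    (hφ : ContDiff ℝ ∞ φ) (hc : HasCompactSupport φ) (y : Euc d) :
    Tendsto (fun s : ℝ => ∫ z, φ z • hess u (y + s • z)) (𝓝[>] 0)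
      (𝓝 (∫ z, φ z • hess u y)) :=
  tendsto_gen hφ.continuous hc (hess_cont hu) y

lemma line_deriv {u : Euc d → ℝ} (hu : ContDiff ℝ 1 u) {ψ : Euc d → G} (hψ : ContDiff ℝ ∞ ψ)
    (hc : HasCompactSupport ψ) (v : Euc d) {t : ℝ} (ht : 0 < t) (τ₀ : ℝ) (k : ℕ) :
    HasDerivAt (fun τ : ℝ => (t ^ k)⁻¹ • ∫ z, u (τ • v + t • z) • ψ z)
      (-(((t ^ (k + 1))⁻¹ • ∫ z, u (τ₀ • v + t • z) • fderiv ℝ ψ z) v)) τ₀ := by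
  have h := (hasDerivAt_I hu hψ.continuous hc 0 v t 0 τ₀).const_smul ((t ^ k)⁻¹)
  simp only [zero_add, mul_zero, add_zero, zero_smul] at h
  have e : -(((t ^ (k + 1))⁻¹ • ∫ z, u (τ₀ • v + t • z) • fderiv ℝ ψ z) v)
      = (t ^ k)⁻¹ • ∫ z, (fderiv ℝ u (τ₀ • v + t • z)) v • ψ z := by
    rw [_root_.smul_apply, integral_cd_apply (w := fun z => u (τ₀ • v + t • z))
      (hu.continuous.comp (by fun_prop)) (cfd hψ) (hc.fderiv ℝ)]
    rw [ibp hu (hψ.of_le (by norm_num)) hc, smul_neg, neg_neg, smul_smul]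
    congr 1
    field_simp
    ring
  rw [e]
  exact h

end Generic
lemma nrm_tri {X : Type*} [NormedAddCommGroup X] (a b : X) {c B : ℝ} (h : ‖b - a‖ ≤ c)
    (hb : ‖b‖ ≤ B) : ‖a‖ ≤ B + c := by
  have b3 := norm_sub_norm_le a b
  rw [norm_sub_rev] at b3
  linarith

lemma unit_mv {X : Type*} [NormedAddCommGroup X] [NormedSpace ℝ X] {f f' : ℝ → X} {C : ℝ} (hf : ∀ τ, HasDerivAt f (f' τ) τ)
    (hb : ∀ τ ∈ Set.Icc (0 : ℝ) 1, ‖f' τ‖ ≤ C) {τ : ℝ} (hτ : τ ∈ Set.Icc (0 : ℝ) 1) :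
    ‖f τ - f 0‖ ≤ C * τ := by
  have := norm_image_sub_le_of_norm_deriv_le_segment' (f := f) (f' := f') (C := C)
    (a := 0) (b := 1) (fun x _ => (hf x).hasDerivWithinAt)
    (fun x hx => hb x (Set.Ico_subset_Icc_self hx)) τ hτ
  simpa using this

lemma smul_small {E : Type*} [NormedAddCommGroup E] [NormedSpace ℝ E] {y : E} {t τ : ℝ} (hy : ‖y‖ ≤ t) (hτ : τ ∈ Set.Icc (0 : ℝ) 1) : ‖τ • y‖ ≤ t := by
  rw [norm_smul, Real.norm_eq_abs, abs_of_nonneg hτ.1]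
  exact (mul_le_of_le_one_left (norm_nonneg y) hτ.2).trans hy

section Stages

variable {E X : Type*} [NormedAddCommGroup E] [NormedSpace ℝ E] [ProperSpace E]
  [NormedAddCommGroup X] [NormedSpace ℝ X] [CompleteSpace X]

/-- the abstract estimates that drive the two stages of the argument -/
structure StageData (Hs : E → X) (W : ℝ → E → X) (J : ℝ → E → E →L[ℝ] X)
    (Q : ℝ → E → E →L[ℝ] E →L[ℝ] X) (c0 C α P R : ℝ) : Prop where
  c0pos : 0 < c0
  Cnn : 0 ≤ C
  α0 : 0 < α
  α1 : α < 1
  P1 : 1 ≤ P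
  R0 : 0 < R
  cont : Continuous Hs
  zero : Hs 0 = 0
  hW : ∀ ε K : ℝ, 0 ≤ ε → 0 ≤ K → (∀ x, ‖x‖ ≤ R → ‖Hs x‖ ≤ K * max ‖x‖ ε) →
    ∀ t y, 0 < t → ε ≤ t → P * t ≤ R → ‖y‖ ≤ t →
      ‖W t y - c0 • Hs y‖ ≤ C * (1 + K) * t ^ (1 + α)
  hJ : ∀ ε K : ℝ, 0 ≤ ε → 0 ≤ K → (∀ x, ‖x‖ ≤ R → ‖Hs x‖ ≤ K * max ‖x‖ ε) →
    ∀ s r y, 0 < s → ε ≤ s → s ≤ r → P * r ≤ R → ‖y‖ ≤ s →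
      ‖J r y - J s y‖ ≤ C * (1 + K) * r ^ α
  hQ : ∀ ε K : ℝ, 0 ≤ ε → 0 ≤ K → (∀ x, ‖x‖ ≤ R → ‖Hs x‖ ≤ K * max ‖x‖ ε) →
    ∀ s r y, 0 < s → ε ≤ s → s ≤ r → P * r ≤ R → ‖y‖ ≤ s →
      ‖Q r y - Q s y‖ ≤ C * (1 + K) * s ^ (α - 1)
  dW : ∀ t v τ, 0 < t → HasDerivAt (fun τ : ℝ => W t (τ • v)) (-(J t (τ • v) v)) τ
  dJ : ∀ t v τ, 0 < t → HasDerivAt (fun τ : ℝ => J t (τ • v)) (-(Q t (τ • v) v)) τ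
  bJ : ∀ r, 0 < r → ∃ B, ∀ y, ‖y‖ ≤ r → ‖J r y‖ ≤ B
  bQ : ∀ r, 0 < r → ∃ B, ∀ y, ‖y‖ ≤ r → ‖Q r y‖ ≤ B

lemma StageData.stage1 {Hs : E → X} {W : ℝ → E → X} {J : ℝ → E → E →L[ℝ] X}
    {Q : ℝ → E → E →L[ℝ] E →L[ℝ] X} {c0 C α P R : ℝ} (h : StageData Hs W J Q c0 C α P R) :
    ∃ K, 0 ≤ K ∧ ∀ x, ‖x‖ ≤ R → ‖Hs x‖ ≤ K * ‖x‖ := by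
  have hc0 := h.c0pos
  have hC := h.Cnn
  have hα := h.α0
  have hR := h.R0
  have hP : 0 < P := lt_of_lt_of_le one_pos h.P1
  -- choice of r0
  obtain ⟨r0, hr0, hr0R, hr0C⟩ : ∃ r0 : ℝ, 0 < r0 ∧ P * r0 ≤ R ∧ 3 * C * r0 ^ α ≤ c0 / 2 := by
    have h1 : Tendsto (fun r : ℝ => 3 * C * r ^ α) (𝓝[>] 0) (𝓝 (3 * C * 0 ^ α)) :=
      (((Real.continuous_rpow_const hα.le).const_mul (3 * C)).tendsto 0).mono_left
        nhdsWithin_le_nhds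
    rw [Real.zero_rpow hα.ne', mul_zero] at h1
    have h2 : Tendsto (fun r : ℝ => P * r) (𝓝[>] 0) (𝓝 (P * 0)) :=
      ((continuous_const.mul continuous_id).tendsto 0).mono_left nhdsWithin_le_nhds
    rw [mul_zero] at h2
    have e1 := h1.eventually_le_const (half_pos hc0)
    have e2 := h2.eventually_le_const hR
    obtain ⟨r, ⟨ha, hb⟩, hc⟩ := ((e1.and e2).and self_mem_nhdsWithin).exists
    exact ⟨r, hc, hb, ha⟩
  obtain ⟨B, hB⟩ := h.bJ r0 hr0
  have hB0 : 0 ≤ B := (norm_nonneg _).trans (hB 0 (by simpa using hr0.le))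
  obtain ⟨S, hS⟩ := (isCompact_closedBall (0 : E) R).exists_bound_of_continuousOn
    h.cont.continuousOn
  have hS0 : 0 ≤ S := (norm_nonneg _).trans (hS 0 (by simpa using hR.le))
  set K0 : ℝ := 2 * (B / c0 + S / r0) + 1 with hK0
  have hK0nn : 0 ≤ K0 := by positivity
  have key : ∀ ε : ℝ, 0 < ε → ε ≤ r0 → ∀ x, ‖x‖ ≤ R → ‖Hs x‖ ≤ K0 * max ‖x‖ ε := by
    intro ε hε hεr
    have hmax : ∀ x : E, 0 < max ‖x‖ ε := fun x => lt_max_of_lt_right hε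
    obtain ⟨xm, hxm, hxmax⟩ := (isCompact_closedBall (0 : E) R).exists_isMaxOn
      ⟨0, by simpa using hR.le⟩
      (f := fun x => ‖Hs x‖ / max ‖x‖ ε)
      ((h.cont.norm.div (continuous_norm.max continuous_const)
        (fun x => (hmax x).ne')).continuousOn)
    set K := ‖Hs xm‖ / max ‖xm‖ ε with hK
    have hKnn : 0 ≤ K := div_nonneg (norm_nonneg _) (hmax xm).le
    have hyp : ∀ x, ‖x‖ ≤ R → ‖Hs x‖ ≤ K * max ‖x‖ ε := by
      intro x hx
      have : ‖Hs x‖ / max ‖x‖ ε ≤ K := hxmax (by simpa using hx)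
      rwa [div_le_iff₀ (hmax x)] at this
    have hKle : K ≤ B / c0 + (1 + K) / 2 + S / r0 := by
      rcases le_or_gt ‖xm‖ r0 with hle | hgt
      · set t := max ‖xm‖ ε with ht
        have ht0 : 0 < t := hmax xm
        have htr : t ≤ r0 := max_le hle hεr
        have hPt : P * t ≤ R := (mul_le_mul_of_nonneg_left htr hP.le).trans hr0R
        have a1 := h.hW ε K hε.le hKnn hyp t xm ht0 (le_max_right _ _) hPt (le_max_left _ _)
        have a2 := h.hW ε K hε.le hKnn hyp t 0 ht0 (le_max_right _ _) hPt (by simpa using ht0.le)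
        rw [h.zero, smul_zero, sub_zero] at a2
        have a3 : ∀ y, ‖y‖ ≤ t → ‖J t y‖ ≤ B + C * (1 + K) * r0 ^ α := by
          intro y hy
          have b1 := h.hJ ε K hε.le hKnn hyp t r0 y ht0 (le_max_right _ _) htr hr0R hy
          have b2 := hB y (hy.trans htr)
          have b3 := norm_sub_norm_le (J t y) (J r0 y)
          rw [norm_sub_rev] at b3
          linarith
        have a4 := unit_mv (h.dW t xm · ht0) (C := (B + C * (1 + K) * r0 ^ α) * t) (by
          intro τ hτ
          rw [norm_neg]
          refine (ContinuousLinearMap.le_opNorm _ _).trans ?_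
          have := a3 (τ • xm) (smul_small (le_max_left _ _) hτ)
          gcongr
          exact le_max_left _ _) (τ := 1) ⟨zero_le_one, le_rfl⟩
        simp only [one_smul, zero_smul, mul_one] at a4
        have a5 : t ^ (1 + α) ≤ t * r0 ^ α := by
          rw [Real.rpow_add ht0, Real.rpow_one]
          gcongr
        have a6 : ‖c0 • Hs xm‖ ≤ ‖W t xm - c0 • Hs xm‖ + ‖W t xm - W t 0‖ + ‖W t 0‖ := by
          have : c0 • Hs xm = -(W t xm - c0 • Hs xm) + (W t xm - W t 0) + W t 0 := by abel
          calc ‖c0 • Hs xm‖ = ‖-(W t xm - c0 • Hs xm) + (W t xm - W t 0) + W t 0‖ := by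
                rw [← this]
            _ ≤ _ := norm_add₃_le
            _ = _ := by rw [norm_neg]
        have a7 : C * (1 + K) * t ^ (1 + α) ≤ C * (1 + K) * (t * r0 ^ α) := by gcongr
        rw [norm_smul, Real.norm_eq_abs, abs_of_pos hc0] at a6
        have a8 : c0 * ‖Hs xm‖ ≤ (B + (1 + K) * (c0 / 2)) * t := by
          have : (1 + K) * t * (3 * C * r0 ^ α) ≤ (1 + K) * t * (c0 / 2) := by gcongr
          nlinarith
        have a9 : c0 * K ≤ B + (1 + K) * (c0 / 2) := by
          rw [hK, ← mul_div_assoc, div_le_iff₀ ht0]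
          exact a8
        have a10 : K ≤ B / c0 + (1 + K) / 2 := by
          have : B / c0 + (1 + K) / 2 = (B + (1 + K) * (c0 / 2)) / c0 := by field_simp
          rw [this, le_div_iff₀ hc0]
          linarith
        have : 0 ≤ S / r0 := by positivity
        linarith
      · have b1 : K ≤ S / r0 := by
          rw [hK]
          have := hS xm hxm
          gcongr
          exact hgt.le.trans (le_max_left _ _)
        have : 0 ≤ B / c0 := by positivity
        linarith
    have hKK : K ≤ K0 := by rw [hK0]; linarith
    intro x hx
    exact (hyp x hx).trans (mul_le_mul_of_nonneg_right hKK (hmax x).le)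
  refine ⟨K0, hK0nn, fun x hx => ?_⟩
  by_cases hx0 : x = 0
  · rw [hx0, h.zero]; simp
  · have hxp : 0 < ‖x‖ := norm_pos_iff.2 hx0
    have := key (min ‖x‖ r0) (lt_min hxp hr0) (min_le_right _ _) x hx
    rwa [max_eq_left (min_le_left _ _)] at this

lemma StageData.stage2 {Hs : E → X} {W : ℝ → E → X} {J : ℝ → E → E →L[ℝ] X}
    {Q : ℝ → E → E →L[ℝ] E →L[ℝ] X} {c0 C α P R : ℝ} (h : StageData Hs W J Q c0 C α P R) :
    ∃ (S : E →L[ℝ] X) (C' δ : ℝ), 0 < C' ∧ 0 < δ ∧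
      ∀ y, ‖y‖ ≤ δ → ‖Hs y - S y‖ ≤ C' * ‖y‖ ^ (1 + α) := by
  obtain ⟨K, hK0, hK⟩ := h.stage1
  have hc0 := h.c0pos
  have hC := h.Cnn
  have hα := h.α0
  have hR := h.R0
  have hP : 0 < P := lt_of_lt_of_le one_pos h.P1
  have hyp : ∀ x, ‖x‖ ≤ R → ‖Hs x‖ ≤ K * max ‖x‖ 0 := fun x hx => by
    rw [max_eq_left (norm_nonneg x)]; exact hK x hx
  set D := C * (1 + K) with hD
  have hD0 : 0 ≤ D := by positivity
  set r0 := R / P with hr0d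
  have hr0 : 0 < r0 := by positivity
  have hPr : ∀ t, t ≤ r0 → P * t ≤ R := by
    intro t ht
    rw [hr0d, le_div_iff₀ hP] at ht
    linarith
  have hJ0 : ∀ s r, 0 < s → s ≤ r → r ≤ r0 → ‖J r 0 - J s 0‖ ≤ D * r ^ α := by
    intro s r hs hsr hr
    exact h.hJ 0 K le_rfl hK0 hyp s r 0 hs hs.le hsr (hPr r hr) (by simpa using hs.le)
  -- limit of J
  set tn : ℕ → ℝ := fun n => r0 * (1 / 2) ^ n with htn
  have htn0 : ∀ n, 0 < tn n := fun n => by positivity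
  have htnanti : ∀ n m, n ≤ m → tn m ≤ tn n := by
    intro n m hnm
    have : (1 / 2 : ℝ) ^ m ≤ (1 / 2 : ℝ) ^ n :=
      pow_le_pow_of_le_one (by norm_num) (by norm_num) hnm
    simp only [htn]
    gcongr
  have htnr : ∀ n, tn n ≤ r0 := fun n => by
    have := htnanti 0 n (Nat.zero_le n)
    simpa [htn] using this
  have htnlim : Tendsto tn atTop (𝓝 0) := by
    have := (tendsto_pow_atTop_nhds_zero_of_lt_one (r := (1 / 2 : ℝ)) (by norm_num)
      (by norm_num)).const_mul r0
    simpa [htn] using this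
  have hcau : CauchySeq (fun n => J (tn n) 0) := by
    refine cauchySeq_of_le_tendsto_0 (fun n => D * tn n ^ α) ?_ ?_
    · intro n m N hn hm
      rw [dist_eq_norm]
      rcases le_total n m with hnm | hnm
      · refine (hJ0 (tn m) (tn n) (htn0 m) (htnanti n m hnm) (htnr n)).trans ?_
        have := htnanti N n hn
        have := (htn0 n).le
        gcongr
      · rw [norm_sub_rev]
        refine (hJ0 (tn n) (tn m) (htn0 n) (htnanti m n hnm) (htnr m)).trans ?_
        have := htnanti N m hm
        have := (htn0 m).le
        gcongr
    · have := (((Real.continuous_rpow_const hα.le).const_mul D).tendsto 0).comp htnlim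
      rw [Real.zero_rpow hα.ne', mul_zero] at this
      exact this
  obtain ⟨L, hL⟩ := cauchySeq_tendsto_of_complete hcau
  have hJL : ∀ r, 0 < r → r ≤ r0 → ‖J r 0 - L‖ ≤ D * r ^ α := by
    intro r hr hrr
    have h1 : Tendsto (fun n => ‖J r 0 - J (tn n) 0‖) atTop (𝓝 ‖J r 0 - L‖) :=
      (tendsto_const_nhds.sub hL).norm
    refine le_of_tendsto h1 ?_
    filter_upwards [htnlim.eventually_le_const hr] with n hn
    exact hJ0 (tn n) r (htn0 n) hn hrr
  -- bound of Q
  obtain ⟨BQ, hBQ⟩ := h.bQ r0 hr0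
  have hBQ0 : 0 ≤ BQ := le_trans (norm_nonneg (Q r0 0)) (hBQ 0 (by simpa using hr0.le))
  set D2 := BQ * r0 ^ (1 - α) + D with hD2
  have hD20 : 0 ≤ D2 := by positivity
  have hQb : ∀ t y, 0 < t → t ≤ r0 → ‖y‖ ≤ t → ‖Q t y‖ ≤ D2 * t ^ (α - 1) := by
    intro t y ht htr hy
    have b1 := h.hQ 0 K le_rfl hK0 hyp t r0 y ht ht.le htr (hPr r0 le_rfl) hy
    have b2 := hBQ y (hy.trans htr)
    have b3 := nrm_tri (Q t y) (Q r0 y) b1 b2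
    have b4 : 1 ≤ r0 ^ (1 - α) * t ^ (α - 1) := by
      have e : t ^ (α - 1) = (t ^ (1 - α))⁻¹ := by
        rw [← Real.rpow_neg ht.le]; congr 1; ring
      rw [e, ← div_eq_mul_inv, le_div_iff₀ (by positivity), one_mul]
      have : 0 ≤ 1 - α := by linarith [h.α1]
      gcongr
    have b5 : BQ ≤ BQ * (r0 ^ (1 - α) * t ^ (α - 1)) := le_mul_of_one_le_right hBQ0 b4
    rw [hD2]
    nlinarith
  set C' := (D2 + 3 * D) / c0 + 1 with hC'
  refine ⟨-(c0⁻¹ • L), C', r0, by positivity, hr0, ?_⟩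
  intro y hy
  by_cases hy0 : y = 0
  · rw [hy0, h.zero, map_zero, sub_zero, norm_zero, norm_zero]
    have : (0 : ℝ) ≤ 0 ^ (1 + α) := Real.rpow_nonneg le_rfl _
    positivity
  set t := ‖y‖ with ht
  have ht0 : 0 < t := norm_pos_iff.2 hy0
  have tp : t ^ (1 + α) = t * t ^ α := by rw [Real.rpow_add ht0, Real.rpow_one]
  have tp2 : t ^ α = t * t ^ (α - 1) := by
    rw [Real.rpow_sub ht0, Real.rpow_one]; field_simp
  have hJt : ∀ τ ∈ Set.Icc (0 : ℝ) 1, ‖J t (τ • y) - J t 0‖ ≤ D2 * t ^ α := by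
    intro τ hτ
    have := unit_mv (h.dJ t y · ht0) (C := D2 * t ^ α) (by
      intro σ hσ
      rw [norm_neg]
      refine (ContinuousLinearMap.le_opNorm _ _).trans ?_
      have := hQb t (σ • y) ht0 hy (smul_small le_rfl hσ)
      rw [tp2]
      calc ‖Q t (σ • y)‖ * ‖y‖ ≤ D2 * t ^ (α - 1) * t := by gcongr
        _ = _ := by ring) hτ
    rw [zero_smul] at this
    refine this.trans (mul_le_of_le_one_right (by positivity) hτ.2)
  have hder : ∀ τ : ℝ, HasDerivAt (fun τ : ℝ => W t (τ • y) + τ • J t 0 y)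
      (-(J t (τ • y) y) + (1 : ℝ) • J t 0 y) τ := fun τ =>
    (h.dW t y τ ht0).add ((hasDerivAt_id τ).smul_const (J t 0 y))
  have hT := unit_mv hder (C := D2 * t ^ (1 + α)) (by
    intro τ hτ
    have e : -(J t (τ • y) y) + (1 : ℝ) • J t 0 y = -((J t (τ • y) - J t 0) y) := by
      rw [one_smul, _root_.sub_apply]; abel
    rw [e, norm_neg]
    refine (ContinuousLinearMap.le_opNorm _ _).trans ?_
    have := hJt τ hτ
    rw [tp]
    calc ‖J t (τ • y) - J t 0‖ * ‖y‖ ≤ D2 * t ^ α * t := by gcongr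
      _ = _ := by ring) (τ := 1) ⟨zero_le_one, le_rfl⟩
  simp only [one_smul, zero_smul, mul_one, add_zero] at hT
  have w1 := h.hW 0 K le_rfl hK0 hyp t y ht0 ht0.le (hPr t hy) le_rfl
  have w2 := h.hW 0 K le_rfl hK0 hyp t 0 ht0 ht0.le (hPr t hy) (by simpa using ht0.le)
  rw [h.zero, smul_zero, sub_zero] at w2
  have w3 : ‖(L - J t 0) y‖ ≤ D * t ^ (1 + α) := by
    refine (ContinuousLinearMap.le_opNorm _ _).trans ?_
    have := hJL t ht0 hy
    rw [norm_sub_rev] at this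
    rw [tp]
    calc ‖L - J t 0‖ * ‖y‖ ≤ D * t ^ α * t := by gcongr
      _ = _ := by ring
  have w4 : ‖c0 • Hs y + L y‖ ≤ (D2 + 3 * D) * t ^ (1 + α) := by
    have e : c0 • Hs y + L y = -(W t y - c0 • Hs y) + (W t y + J t 0 y - W t 0) + W t 0
        + (L - J t 0) y := by
      rw [_root_.sub_apply]; abel
    rw [e]
    refine (norm_add_le _ _).trans ?_
    have := norm_add₃_le (a := -(W t y - c0 • Hs y)) (b := (W t y + J t 0 y - W t 0)) (c := W t 0)
    rw [norm_neg] at this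
    linarith
  have w5 : Hs y - (-(c0⁻¹ • L)) y = c0⁻¹ • (c0 • Hs y + L y) := by
    rw [smul_add, smul_smul, inv_mul_cancel₀ hc0.ne', one_smul, _root_.neg_apply,
      _root_.smul_apply]
    abel
  rw [w5, norm_smul, norm_inv, Real.norm_eq_abs, abs_of_pos hc0]
  have w6 : c0⁻¹ * ‖c0 • Hs y + L y‖ ≤ c0⁻¹ * ((D2 + 3 * D) * t ^ (1 + α)) := by gcongr
  have w7 : 0 ≤ t ^ (1 + α) := by positivity
  calc _ ≤ _ := w6
    _ = (D2 + 3 * D) / c0 * t ^ (1 + α) := by ring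
    _ ≤ C' * t ^ (1 + α) := by rw [hC']; nlinarith

end Stages
section CoreSec
open scoped ContDiff

variable {d : ℕ} {H : Type*} [NormedAddCommGroup H] [NormedSpace ℝ H]

/-- the normalized problem at the origin -/
structure Core (u g : Euc d → ℝ) (A : Euc d → Euc d →L[ℝ] Euc d) (l : Euc d →L[ℝ] ℝ)
    (lam Θ M α R : ℝ) : Prop where
  hu : ContDiff ℝ 2 u
  zero : hess u 0 = 0
  eqn : ∀ x, ‖x‖ ≤ R → ∑ i : Fin d, hess u x (A x (bvec i)) (bvec i) = g x
  hA : ∀ x y, ‖x‖ ≤ R → ‖y‖ ≤ R → ‖A x - A y‖ ≤ M * ‖x - y‖ ^ α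
  symm : ∀ x, ‖x‖ ≤ R → ∀ ξ η, ⟪A x ξ, η⟫ = ⟪ξ, A x η⟫
  coer : ∀ x, ‖x‖ ≤ R → ∀ ξ, lam * ‖ξ‖ ^ 2 ≤ ⟪A x ξ, ξ⟫
  nrm : ∀ x, ‖x‖ ≤ R → ‖A x‖ ≤ Θ
  hg : ∀ τ N, 0 ≤ τ → τ ≤ R → (∀ z, ‖z‖ ≤ τ → ‖hess u z‖ ≤ N) →
    ∀ x y, ‖x‖ ≤ τ → ‖y‖ ≤ τ → |g x - g y - l (x - y)| ≤ M * (τ ^ α + N) * ‖x - y‖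
  lam0 : 0 < lam
  Θ0 : 0 < Θ
  M0 : 0 ≤ M
  α0 : 0 < α
  α1 : α < 1
  R0 : 0 < R
  R1 : R ≤ 1

/-- the averaged quantity -/
noncomputable def Iav (u : Euc d → ℝ) (k : ℕ) (Φ : Euc d → H) (t : ℝ) (y : Euc d) : H :=
  (t ^ k)⁻¹ • ∫ z, u (y + t • z) • Φ z

lemma cont_trace {u : Euc d → ℝ} (hu : ContDiff ℝ 2 u) (B : Euc d →L[ℝ] Euc d) (y : Euc d)
    (s : ℝ) : Continuous (fun z => ∑ i : Fin d, hess u (y + s • z) (B (bvec i)) (bvec i)) := by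
  have h : Continuous (fun z : Euc d => hess u (y + s • z)) :=
    (hess_cont hu).comp (by fun_prop)
  refine continuous_finsetSum _ fun i _ => ?_
  exact (h.clm_apply continuous_const).clm_apply continuous_const

lemma pair_db {B : Euc d →L[ℝ] Euc d} {k : ℕ} {ρ : ℝ} {Φ X : Euc d → H}
    (hk : KPair B k ρ Φ X) (hkill : ∀ (c : ℝ) (l : Euc d →L[ℝ] ℝ), ∫ z, (c + l z) • X z = 0)
    {C : ℝ} (hC : ∀ z, ‖X z‖ ≤ C) {u : Euc d → ℝ} (hu : ContDiff ℝ 2 u) (y : Euc d) {s e : ℝ}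
    (hs : 0 < s) (he : 0 ≤ e) (c : ℝ) (l : Euc d →L[ℝ] ℝ)
    (hF : ∀ z, ‖z‖ ≤ ρ →
      |∑ i : Fin d, hess u (y + s • z) (B (bvec i)) (bvec i) - (c + l z)| ≤ e) :
    ∃ D, HasDerivAt (fun s => Iav u k Φ s y) D s ∧
      ‖D‖ ≤ (s ^ k)⁻¹ * s * (e * C * (volume (closedBall (0 : Euc d) ρ)).toReal) := by
  refine ⟨_, hk.hasDerivAt hu y hs, ?_⟩
  have h1 := kill_gen hk.cχ hk.sχ he hC (cont_trace hu B y s) c l (hkill c l) hF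
  rw [norm_smul, norm_neg, Real.norm_eq_abs, abs_of_nonneg (by positivity)]
  gcongr

lemma Core.F_bound {u g : Euc d → ℝ} {A : Euc d → Euc d →L[ℝ] Euc d} {l : Euc d →L[ℝ] ℝ}
    {lam Θ M α R : ℝ} (h : Core u g A l lam Θ M α R) {p y z : Euc d} {s τ N q ρ : ℝ}
    (hp : ‖p‖ ≤ R) (hy : ‖y‖ ≤ τ) (hx : ‖y + s • z‖ ≤ τ) (hτ : τ ≤ R)
    (hN : ∀ x, ‖x‖ ≤ τ → ‖hess u x‖ ≤ N) (hq : ‖p - (y + s • z)‖ ≤ q) (hz : ‖z‖ ≤ ρ)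
    (hs : 0 ≤ s) :
    |∑ i : Fin d, hess u (y + s • z) (A p (bvec i)) (bvec i) - (g y + (s • l) z)|
      ≤ M * (τ ^ α + N) * (s * ρ) + d * (N * (M * q ^ α)) := by
  have hM := h.M0
  have hα := h.α0
  have hτ0 : 0 ≤ τ := (norm_nonneg _).trans hy
  have hN0 : 0 ≤ N := le_trans (norm_nonneg (hess u y)) (hN y hy)
  set x := y + s • z with hxd
  have h1 := h.eqn x (hx.trans hτ)
  have h2 : ∑ i : Fin d, hess u x (A p (bvec i)) (bvec i)
      = g x + ∑ i : Fin d, hess u x ((A p - A x) (bvec i)) (bvec i) := by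
    rw [← h1, ← Finset.sum_add_distrib]
    refine Finset.sum_congr rfl fun i _ => ?_
    simp
  have h3 := trace_bound (hess u x) (A p - A x)
  have h4 := h.hA p x hp (hx.trans hτ)
  have h5 := h.hg τ N hτ0 hτ hN x y hx hy
  have h6 : x - y = s • z := by rw [hxd]; abel
  rw [h6, map_smul, norm_smul, Real.norm_eq_abs, abs_of_nonneg hs, smul_eq_mul] at h5
  have h7 : ‖hess u x‖ * ‖A p - A x‖ ≤ N * (M * q ^ α) := by
    have := hN x hx
    have h4' : ‖A p - A x‖ ≤ M * q ^ α := h4.trans (by gcongr)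
    gcongr
  have h8 : M * (τ ^ α + N) * (s * ‖z‖) ≤ M * (τ ^ α + N) * (s * ρ) := by gcongr
  have h9 : (d : ℝ) * (‖hess u x‖ * ‖A p - A x‖) ≤ d * (N * (M * q ^ α)) := by gcongr
  rw [h2, _root_.smul_apply, smul_eq_mul]
  have e : g x + ∑ i : Fin d, hess u x ((A p - A x) (bvec i)) (bvec i) - (g y + s * l z)
      = (g x - g y - s * l z) + ∑ i : Fin d, hess u x ((A p - A x) (bvec i)) (bvec i) := by ring
  rw [e]
  refine (abs_add_le _ _).trans ?_
  linarith

lemma pow_P_le {P x a : ℝ} (hP : 1 ≤ P) (hx : 0 ≤ x) (ha0 : 0 < a) (ha : a < 1) :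
    (P * x) ^ a ≤ P * x ^ a := by
  rw [Real.mul_rpow (by linarith) hx]
  have : P ^ a ≤ P := by
    calc P ^ a ≤ P ^ (1 : ℝ) := Real.rpow_le_rpow_of_exponent_le hP ha.le
      _ = P := Real.rpow_one P
  have : 0 ≤ x ^ a := by positivity
  gcongr

/-- derivative integration for the kernels of order `k ≥ 3`. -/
lemma Core.JQ {u g : Euc d → ℝ} {A : Euc d → Euc d →L[ℝ] Euc d} {l : Euc d →L[ℝ] ℝ}
    {lam Θ M α R : ℝ} (h : Core u g A l lam Θ M α R) {k : ℕ} {ρ : ℝ} (hρ : 0 < ρ)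
    {Φ X : Euc d → H} (hk : KPair (A 0) k ρ Φ X)
    (hkill : ∀ (c : ℝ) (l : Euc d →L[ℝ] ℝ), ∫ z, (c + l z) • X z = 0)
    {C : ℝ} (hC : ∀ z, ‖X z‖ ≤ C) {ε K : ℝ} (hK : 0 ≤ K)
    (hyp : ∀ x, ‖x‖ ≤ R → ‖hess u x‖ ≤ K * max ‖x‖ ε) {s r : ℝ} {y : Euc d}
    (hs : 0 < s) (hεs : ε ≤ s) (hsr : s ≤ r) (hr : (1 + ρ) * r ≤ R) (hy : ‖y‖ ≤ s)
    {γ : ℝ} (hγ : γ = α + 3 - k) (hγ0 : γ ≠ 0) :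
    ‖Iav u k Φ r y - Iav u k Φ s y‖
      ≤ M * (1 + ρ) ^ 2 * (1 + d) * (1 + K) * C * (volume (closedBall (0 : Euc d) ρ)).toReal
        * ((r ^ γ - s ^ γ) / γ) := by
  set V := (volume (closedBall (0 : Euc d) ρ)).toReal with hV
  have hV0 : 0 ≤ V := ENNReal.toReal_nonneg
  have hC0 : 0 ≤ C := (norm_nonneg _).trans (hC 0)
  have hM := h.M0
  have hα := h.α0
  set P := 1 + ρ with hPd
  have hP : 1 ≤ P := by rw [hPd]; linarith
  have step : ∀ t ∈ Set.Icc s r, ∃ D, HasDerivAt (fun s => Iav u k Φ s y) D t ∧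
      ‖D‖ ≤ M * P ^ 2 * (1 + d) * (1 + K) * C * V * t ^ (γ - 1) := by
    intro t ht
    have ht0 : 0 < t := hs.trans_le ht.1
    set τ := P * t with hτ
    have hτR : τ ≤ R := le_trans (by rw [hτ]; have := ht.2; gcongr) hr
    have htτ : t ≤ τ := le_mul_of_one_le_left ht0.le hP
    have ht1 : t ≤ 1 := htτ.trans (hτR.trans h.R1)
    have hN : ∀ x, ‖x‖ ≤ τ → ‖hess u x‖ ≤ K * τ := by
      intro x hx
      refine (hyp x (hx.trans hτR)).trans ?_
      gcongr
      exact max_le hx (hεs.trans (ht.1.trans htτ))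
    have hzz : ∀ z : Euc d, ‖z‖ ≤ ρ → ‖y + t • z‖ ≤ τ := by
      intro z hz
      refine (norm_add_le _ _).trans ?_
      rw [norm_smul, Real.norm_eq_abs, abs_of_pos ht0, hτ, hPd]
      have := mul_le_mul_of_nonneg_left hz ht0.le
      have := hy.trans ht.1
      linarith
    obtain ⟨D, hD, hDb⟩ := pair_db hk hkill hC h.hu y ht0
      (e := M * (τ ^ α + K * τ) * (t * ρ) + d * (K * τ * (M * τ ^ α))) (by positivity)
      (g y) (t • l) (fun z hz => h.F_bound (by simpa using h.R0.le) ((hy.trans ht.1).trans htτ)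
        (hzz z hz) hτR hN (by rw [zero_sub, norm_neg]; exact hzz z hz) hz ht0.le)
    refine ⟨D, hD, hDb.trans ?_⟩
    have e1 : τ ^ α ≤ P * t ^ α := pow_P_le hP ht0.le hα h.α1
    have e2 : τ ≤ P * t ^ α := by
      rw [hτ]
      gcongr
      calc t = t ^ (1 : ℝ) := (Real.rpow_one t).symm
        _ ≤ t ^ α := Real.rpow_le_rpow_of_exponent_ge ht0 ht1 h.α1.le
    have hρP : ρ ≤ P := by rw [hPd]; linarith
    have e3 : M * (τ ^ α + K * τ) * (t * ρ) + d * (K * τ * (M * τ ^ α))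
        ≤ M * P ^ 2 * (1 + d) * (1 + K) * (t * t ^ α) := by
      have b1 : M * (τ ^ α + K * τ) * (t * ρ)
          ≤ M * (P * t ^ α + K * (P * t ^ α)) * (t * P) := by gcongr
      have b2 : (d : ℝ) * (K * τ * (M * τ ^ α)) ≤ d * ((1 + K) * (P * t) * (M * (P * t ^ α))) := by
        have : K ≤ 1 + K := by linarith
        gcongr
      refine (add_le_add b1 b2).trans (le_of_eq ?_)
      ring
    have e4 : (t ^ k)⁻¹ * t * (t * t ^ α) = t ^ (γ - 1) := by
      rw [hγ, show α + 3 - (k : ℝ) - 1 = α + 2 - k by ring, Real.rpow_sub ht0,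
        Real.rpow_add ht0, Real.rpow_natCast]
      norm_num
      field_simp
    calc (t ^ k)⁻¹ * t * ((M * (τ ^ α + K * τ) * (t * ρ) + d * (K * τ * (M * τ ^ α))) * C * V)
        ≤ (t ^ k)⁻¹ * t * ((M * P ^ 2 * (1 + d) * (1 + K) * (t * t ^ α)) * C * V) := by gcongr
      _ = M * P ^ 2 * (1 + d) * (1 + K) * C * V * ((t ^ k)⁻¹ * t * (t * t ^ α)) := by ring
      _ = _ := by rw [e4]
  refine mv_pow (f := fun s => Iav u k Φ s y) (f' := fun t => deriv (fun s => Iav u k Φ s y) t)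
    hs hsr hγ0 ?_ ?_
  · intro t ht
    obtain ⟨D, hD, -⟩ := step t ht
    exact hD.differentiableAt.hasDerivAt
  · intro t ht
    obtain ⟨D, hD, hb⟩ := step t ht
    rw [hD.deriv]
    exact hb

/-- derivative integration for the kernel of order `2` frozen at `y`. -/
lemma Core.L1 {u g : Euc d → ℝ} {A : Euc d → Euc d →L[ℝ] Euc d} {l : Euc d →L[ℝ] ℝ}
    {lam Θ M α R : ℝ} (h : Core u g A l lam Θ M α R) {ρ : ℝ} (hρ : 0 < ρ) {y : Euc d}
    {Φ X : Euc d → H} (hk : KPair (A y) 2 ρ Φ X)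
    (hkill : ∀ (c : ℝ) (l : Euc d →L[ℝ] ℝ), ∫ z, (c + l z) • X z = 0)
    {C : ℝ} (hC : ∀ z, ‖X z‖ ≤ C) {ε K : ℝ} (hK : 0 ≤ K)
    (hyp : ∀ x, ‖x‖ ≤ R → ‖hess u x‖ ≤ K * max ‖x‖ ε) {t : ℝ}
    (ht : 0 < t) (hεt : ε ≤ t) (htR : (1 + ρ) * t ≤ R) (hy : ‖y‖ ≤ t) {T : H}
    (hT : Tendsto (fun s => Iav u 2 Φ s y) (𝓝[>] 0) (𝓝 T)) :
    ‖Iav u 2 Φ t y - T‖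
      ≤ M * (1 + ρ) ^ 2 * (1 + d) * (1 + K) * C * (volume (closedBall (0 : Euc d) ρ)).toReal
        * t ^ (1 + α) / α := by
  set V := (volume (closedBall (0 : Euc d) ρ)).toReal with hV
  have hV0 : 0 ≤ V := ENNReal.toReal_nonneg
  have hC0 : 0 ≤ C := (norm_nonneg _).trans (hC 0)
  have hM := h.M0
  have hα := h.α0
  set P := 1 + ρ with hPd
  have hP : 1 ≤ P := by rw [hPd]; linarith
  set τ := P * t with hτ
  have htτ : t ≤ τ := le_mul_of_one_le_left ht.le hP
  have ht1 : t ≤ 1 := htτ.trans (htR.trans h.R1)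
  have hρP : ρ ≤ P := by rw [hPd]; linarith
  have hN : ∀ x, ‖x‖ ≤ τ → ‖hess u x‖ ≤ K * τ := by
    intro x hx
    refine (hyp x (hx.trans htR)).trans ?_
    gcongr
    exact max_le hx (hεt.trans htτ)
  have step : ∀ s ∈ Set.Ioc 0 t, ∃ D, HasDerivAt (fun s => Iav u 2 Φ s y) D s ∧
      ‖D‖ ≤ M * P ^ 2 * (1 + d) * (1 + K) * C * V * t * s ^ (α - 1) := by
    intro s hs
    have hs0 : 0 < s := hs.1
    have hsz : ∀ z : Euc d, ‖z‖ ≤ ρ → ‖s • z‖ ≤ s * ρ := by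
      intro z hz
      rw [norm_smul, Real.norm_eq_abs, abs_of_pos hs0]
      gcongr
    have hzz : ∀ z : Euc d, ‖z‖ ≤ ρ → ‖y + s • z‖ ≤ τ := by
      intro z hz
      refine (norm_add_le _ _).trans ?_
      rw [hτ, hPd]
      have := hsz z hz
      have : s * ρ ≤ t * ρ := mul_le_mul_of_nonneg_right hs.2 hρ.le
      linarith
    obtain ⟨D, hD, hDb⟩ := pair_db hk hkill hC h.hu y hs0
      (e := M * (τ ^ α + K * τ) * (s * ρ) + d * (K * τ * (M * (s * ρ) ^ α))) (by positivity)
      (g y) (s • l) (fun z hz => h.F_bound ((hy.trans htτ).trans htR) (hy.trans htτ)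
        (hzz z hz) htR hN (by
          rw [show y - (y + s • z) = -(s • z) by abel, norm_neg]; exact hsz z hz) hz hs0.le)
    refine ⟨D, hD, hDb.trans ?_⟩
    have e0 : t ^ α ≤ t * s ^ (α - 1) := by
      have : t ^ α = t * t ^ (α - 1) := by
        rw [Real.rpow_sub ht, Real.rpow_one]; field_simp
      rw [this]
      exact mul_le_mul_of_nonneg_left
        (Real.rpow_le_rpow_of_nonpos hs0 hs.2 (by linarith [h.α1])) ht.le
    have e1 : τ ^ α ≤ P * (t * s ^ (α - 1)) :=
      (pow_P_le hP ht.le hα h.α1).trans (by gcongr)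
    have e2 : τ ≤ P * (t * s ^ (α - 1)) := by
      rw [hτ]
      refine mul_le_mul_of_nonneg_left (le_trans ?_ e0) (by linarith)
      calc t = t ^ (1 : ℝ) := (Real.rpow_one t).symm
        _ ≤ t ^ α := Real.rpow_le_rpow_of_exponent_ge ht ht1 h.α1.le
    have e5 : (s * ρ) ^ α ≤ P * (s * s ^ (α - 1)) := by
      have : s ^ α = s * s ^ (α - 1) := by
        rw [Real.rpow_sub hs0, Real.rpow_one]; field_simp
      rw [← this]
      refine le_trans ?_ (pow_P_le hP hs0.le hα h.α1)
      rw [mul_comm]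
      gcongr
    have e3 : M * (τ ^ α + K * τ) * (s * ρ) + d * (K * τ * (M * (s * ρ) ^ α))
        ≤ M * P ^ 2 * (1 + d) * (1 + K) * (s * (t * s ^ (α - 1))) := by
      have b1 : M * (τ ^ α + K * τ) * (s * ρ)
          ≤ M * (P * (t * s ^ (α - 1)) + K * (P * (t * s ^ (α - 1)))) * (s * P) := by gcongr
      have b2 : (d : ℝ) * (K * τ * (M * (s * ρ) ^ α))
          ≤ d * ((1 + K) * (P * t) * (M * (P * (s * s ^ (α - 1))))) := by
        have : K ≤ 1 + K := by linarith
        gcongr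
      refine (add_le_add b1 b2).trans (le_of_eq ?_)
      ring
    calc (s ^ 2)⁻¹ * s * ((M * (τ ^ α + K * τ) * (s * ρ) + d * (K * τ * (M * (s * ρ) ^ α))) * C * V)
        ≤ (s ^ 2)⁻¹ * s * ((M * P ^ 2 * (1 + d) * (1 + K) * (s * (t * s ^ (α - 1)))) * C * V) := by
          gcongr
      _ = _ := by field_simp
  have main : ∀ s ∈ Set.Ioc 0 t, ‖Iav u 2 Φ t y - Iav u 2 Φ s y‖
      ≤ M * P ^ 2 * (1 + d) * (1 + K) * C * V * t ^ (1 + α) / α := by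
    intro s hs
    have := mv_pow (f := fun s => Iav u 2 Φ s y)
      (f' := fun t => deriv (fun s => Iav u 2 Φ s y) t)
      (D := M * P ^ 2 * (1 + d) * (1 + K) * C * V * t) hs.1 hs.2 hα.ne'
      (fun r hr => by
        obtain ⟨D, hD, -⟩ := step r ⟨hs.1.trans_le hr.1, hr.2⟩
        exact hD.differentiableAt.hasDerivAt)
      (fun r hr => by
        obtain ⟨D, hD, hb⟩ := step r ⟨hs.1.trans_le hr.1, hr.2⟩
        rw [hD.deriv]
        exact hb)
    refine this.trans ?_
    have hsα : 0 ≤ s ^ α := Real.rpow_nonneg hs.1.le _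
    rw [Real.rpow_add ht, Real.rpow_one]
    calc M * P ^ 2 * (1 + d) * (1 + K) * C * V * t * ((t ^ α - s ^ α) / α)
        ≤ M * P ^ 2 * (1 + d) * (1 + K) * C * V * t * (t ^ α / α) := by
          gcongr
          linarith
      _ = _ := by ring
  have hlim : Tendsto (fun s => ‖Iav u 2 Φ t y - Iav u 2 Φ s y‖) (𝓝[>] 0)
      (𝓝 ‖Iav u 2 Φ t y - T‖) := (tendsto_const_nhds.sub hT).norm
  refine le_of_tendsto hlim ?_
  filter_upwards [Ioc_mem_nhdsGT ht] with s hs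
  exact main s hs

lemma Iav_bdd {u : Euc d → ℝ} (hu : Continuous u) {k : ℕ} {ρ : ℝ} {Φ : Euc d → H}
    (hΦ : ContDiff ℝ ∞ Φ) (hs : tsupport Φ ⊆ closedBall 0 ρ) {r : ℝ} (hr : 0 < r) :
    ∃ B, ∀ y, ‖y‖ ≤ r → ‖Iav u k Φ r y‖ ≤ B := by
  obtain ⟨C, hC⟩ := (cpt_of_sub hs).exists_bound_of_continuous hΦ.continuous
  obtain ⟨S, hS⟩ := (isCompact_closedBall (0 : Euc d) (r + r * ρ)).exists_bound_of_continuousOn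
    hu.continuousOn
  refine ⟨(r ^ k)⁻¹ * (max S 0 * C * (volume (closedBall (0 : Euc d) ρ)).toReal), fun y hy => ?_⟩
  rw [Iav, norm_smul, Real.norm_eq_abs, abs_of_nonneg (by positivity)]
  gcongr
  refine norm_integral_ball hs (le_max_right _ _) ?_ hC
  intro z hz
  refine le_trans ?_ (le_max_left _ _)
  rw [← Real.norm_eq_abs]
  apply hS
  rw [mem_closedBall_zero_iff]
  refine (norm_add_le _ _).trans ?_
  rw [norm_smul, Real.norm_eq_abs, abs_of_pos hr]
  gcongr

end CoreSec
section AssembleSec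
open scoped ContDiff

variable {d : ℕ} {H : Type*} [NormedAddCommGroup H] [NormedSpace ℝ H]

lemma exists_bd {K : Euc d → H} {ρ : ℝ} (hK : ContDiff ℝ ∞ K)
    (hs : tsupport K ⊆ closedBall 0 ρ) : ∃ C, ∀ z, ‖K z‖ ≤ C :=
  (cpt_of_sub hs).exists_bound_of_continuous hK.continuous

lemma swap_bound {φ φ' : Euc d → ℝ} (hφ : Continuous φ) (hφ' : Continuous φ') {ρ e c : ℝ}
    (hs : tsupport φ ⊆ closedBall 0 ρ) (hs' : tsupport φ' ⊆ closedBall 0 ρ)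
    {T : Euc d → H} (hT : Continuous T) (T0 : H) (he : 0 ≤ e)
    (h1 : ∀ z, ‖z‖ ≤ ρ → |φ z - φ' z| ≤ e) (h2 : ∀ z, ‖z‖ ≤ ρ → ‖T z - T0‖ ≤ c) :
    ‖((∫ z, φ z • T z) - ∫ z, φ z • T0) - ((∫ z, φ' z • T z) - ∫ z, φ' z • T0)‖
      ≤ e * c * (volume (closedBall (0 : Euc d) ρ)).toReal := by
  have i1 : Integrable (fun z => φ z • T z) :=
    (hφ.smul hT).integrable_of_hasCompactSupport (cpt_of_sub hs).smul_right
  have i2 : Integrable (fun z => φ z • T0) :=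
    (hφ.smul continuous_const).integrable_of_hasCompactSupport (cpt_of_sub hs).smul_right
  have i1' : Integrable (fun z => φ' z • T z) :=
    (hφ'.smul hT).integrable_of_hasCompactSupport (cpt_of_sub hs').smul_right
  have i2' : Integrable (fun z => φ' z • T0) :=
    (hφ'.smul continuous_const).integrable_of_hasCompactSupport (cpt_of_sub hs').smul_right
  have e0 : ((∫ z, φ z • T z) - ∫ z, φ z • T0) - ((∫ z, φ' z • T z) - ∫ z, φ' z • T0)
      = ∫ z, (φ z - φ' z) • (T z - T0) := by
    have e9 := integral_sub (i1.sub i2) (i1'.sub i2')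
    simp only [Pi.sub_apply] at e9
    rw [← integral_sub i1 i2, ← integral_sub i1' i2', ← e9]
    refine integral_congr_ae (Eventually.of_forall fun z => ?_)
    simp only [sub_smul, smul_sub]
    abel
  rw [e0, ← setIntegral_eq_integral_of_forall_compl_eq_zero (s := closedBall (0 : Euc d) ρ)]
  · refine norm_setIntegral_le_of_norm_le_const measure_closedBall_lt_top ?_
    intro z hz
    rw [norm_smul, Real.norm_eq_abs]
    have hz' : ‖z‖ ≤ ρ := by simpa using hz
    have a1 := h1 z hz'
    have a2 := h2 z hz'
    gcongr
  · intro z hz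
    rw [image_eq_zero_of_notMem_tsupport (fun h => hz (hs h)),
      image_eq_zero_of_notMem_tsupport (fun h => hz (hs' h))]
    simp

lemma swap_final {a b a' b' : H} {x y : ℝ} (h1 : ‖(a - b) - (a' - b')‖ ≤ x)
    (h2 : ‖a' - b'‖ ≤ y) : ‖a - b‖ ≤ x + y := by
  have := norm_add_le ((a - b) - (a' - b')) (a' - b')
  rw [sub_add_cancel] at this
  linarith

lemma diff_le {a b : H} {x : ℝ} (h1 : ‖a‖ ≤ x) (h2 : ‖b‖ ≤ x) : ‖a - b‖ ≤ 2 * x := by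
  have := norm_sub_le a b
  linarith

lemma c0_pos {B : Euc d →L[ℝ] Euc d} {ρ : ℝ} (hs : tsupport (phiB B) ⊆ closedBall 0 ρ) :
    0 < ∫ z, phiB B z := by
  refine (phiB_contDiff B).continuous.integral_pos_of_hasCompactSupport_nonneg_nonzero
    (cpt_of_sub hs) (fun z => hprof_nonneg _) (x := 0) ?_
  simp [phiB, hprof_at_zero]

lemma Core.hW {u g : Euc d → ℝ} {A : Euc d → Euc d →L[ℝ] Euc d} {l : Euc d →L[ℝ] ℝ}
    {lam Θ M α R : ℝ} (h : Core u g A l lam Θ M α R) {ρ β L : ℝ} (hρ : 0 < ρ)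
    (hL0 : 0 ≤ L) (hL : ∀ s, 0 ≤ s → |deriv hprof s| ≤ L)
    (hL1 : ∀ s, 1 < s → deriv hprof s = 0)
    (hL2 : ∀ s t, 0 ≤ s → 0 ≤ t → |hprof s - hprof t| ≤ L * |s - t|)
    (hβ : 0 ≤ β)
    {B : Euc d → Euc d →L[ℝ] Euc d} (hB : ∀ y, ‖y‖ ≤ R → GoodInv (A y) (B y) β ρ)
    {ε K : ℝ} (hK : 0 ≤ K)
    (hyp : ∀ x, ‖x‖ ≤ R → ‖hess u x‖ ≤ K * max ‖x‖ ε) {t : ℝ} {y : Euc d}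
    (ht : 0 < t) (hεt : ε ≤ t) (htR : (1 + ρ) * t ≤ R) (hy : ‖y‖ ≤ t) :
    ‖Iav u 2 (fderiv ℝ (fderiv ℝ (phiB (B 0)))) t y - (∫ z, phiB (B 0) z) • hess u y‖
      ≤ (M * (1 + ρ) ^ 2 * (1 + d) * (2 * L * (β * ρ) ^ 2 + β)
          * (volume (closedBall (0 : Euc d) ρ)).toReal / α
        + L * (β ^ 2 * M * ρ ^ 2) * (2 * (1 + ρ)) * (volume (closedBall (0 : Euc d) ρ)).toReal)
        * (1 + K) * t ^ (1 + α) := by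
  set V := (volume (closedBall (0 : Euc d) ρ)).toReal with hV
  have hV0 : 0 ≤ V := ENNReal.toReal_nonneg
  have hM := h.M0
  have hα := h.α0
  set P := 1 + ρ with hPd
  have hP : 1 ≤ P := by rw [hPd]; linarith
  set τ := P * t with hτ
  have htτ : t ≤ τ := le_mul_of_one_le_left ht.le hP
  have hyR : ‖y‖ ≤ R := (hy.trans htτ).trans htR
  have h0R : ‖(0 : Euc d)‖ ≤ R := by simpa using h.R0.le
  have k0 := KPair_base (hB 0 h0R) hρ
  have ky := KPair_base (hB y hyR) hρ
  have hlim : Tendsto (fun s => Iav u 2 (fderiv ℝ (fderiv ℝ (phiB (B y)))) s y) (𝓝[>] 0)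
      (𝓝 (∫ z, phiB (B y) z • hess u y)) := by
    refine (hess_repr_tendsto h.hu ky.cφ (cpt_of_sub ky.sφ) y).congr' ?_
    filter_upwards [self_mem_nhdsWithin] with s hs
    exact (hess_repr h.hu ky.cφ (cpt_of_sub ky.sφ) y hs).symm
  have h1 := h.L1 hρ (y := y) ky.succ.succ
    (fun c l => affine_kill ky.cχ (cpt_of_sub ky.sχ) c l)
    (chiB_bound hL0 hL hL1 (hB y hyR) hρ) hK hyp ht hεt htR hy hlim
  have e1 : Iav u 2 (fderiv ℝ (fderiv ℝ (phiB (B y)))) t y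
      = ∫ z, phiB (B y) z • hess u (y + t • z) := hess_repr h.hu ky.cφ (cpt_of_sub ky.sφ) y ht
  have e2 : Iav u 2 (fderiv ℝ (fderiv ℝ (phiB (B 0)))) t y
      = ∫ z, phiB (B 0) z • hess u (y + t • z) := hess_repr h.hu k0.cφ (cpt_of_sub k0.sφ) y ht
  have hN : ∀ x, ‖x‖ ≤ τ → ‖hess u x‖ ≤ K * τ := by
    intro x hx
    refine (hyp x (hx.trans htR)).trans ?_
    gcongr
    exact max_le hx (hεt.trans htτ)
  have h2 := swap_bound (T := fun z => hess u (y + t • z)) k0.cφ.continuous ky.cφ.continuous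
    k0.sφ ky.sφ ((hess_cont h.hu).comp (by fun_prop)) (hess u y)
    (e := L * (β ^ 2 * (M * t ^ α) * ρ ^ 2)) (c := 2 * (K * τ)) (by positivity)
    (fun z hz => by
      refine (phiB_lip hL0 hL2 (hB 0 h0R) (hB y hyR) hρ z).trans ?_
      have a1 : ‖A 0 - A y‖ ≤ M * t ^ α := by
        refine (h.hA 0 y h0R hyR).trans ?_
        rw [zero_sub, norm_neg]
        gcongr
      gcongr)
    (fun z hz => by
      refine diff_le (hN _ ?_) (hN _ (hy.trans htτ))
      refine (norm_add_le _ _).trans ?_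
      rw [norm_smul, Real.norm_eq_abs, abs_of_pos ht, hτ, hPd]
      have := mul_le_mul_of_nonneg_left hz ht.le
      linarith)
  rw [e1] at h1
  have e4 : (∫ z, phiB (B 0) z) • hess u y = ∫ z, phiB (B 0) z • hess u y :=
    (integral_smul_const (fun z => phiB (B 0) z) (hess u y)).symm
  rw [e2, e4]
  refine (swap_final h2 h1).trans ?_
  have e3 : t ^ (1 + α) = t * t ^ α := by rw [Real.rpow_add ht, Real.rpow_one]
  have b2 : L * (β ^ 2 * (M * t ^ α) * ρ ^ 2) * (2 * (K * τ)) * V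
      ≤ L * (β ^ 2 * (M * t ^ α) * ρ ^ 2) * (2 * ((1 + K) * τ)) * V := by
    have : K ≤ 1 + K := by linarith
    gcongr
  refine (add_le_add b2 le_rfl).trans (le_of_eq ?_)
  rw [e3, hτ]
  ring

set_option maxHeartbeats 2000000 in
set_option maxSynthPendingDepth 3 in
theorem Core.conclusion {u g : Euc d → ℝ} {A : Euc d → Euc d →L[ℝ] Euc d} {l : Euc d →L[ℝ] ℝ}
    {lam Θ M α R : ℝ} (h : Core u g A l lam Θ M α R) :
    ∃ (S : Euc d →L[ℝ] Euc d →L[ℝ] Euc d →L[ℝ] ℝ) (C' δ : ℝ), 0 < C' ∧ 0 < δ ∧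
      ∀ y, ‖y‖ ≤ δ → ‖hess u y - S y‖ ≤ C' * ‖y‖ ^ (1 + α) := by
  obtain ⟨L, hL0, hL, hL1, hL2⟩ := exists_hprof_lip
  set ρ := Θ / Real.sqrt lam with hρd
  have hρ : 0 < ρ := div_pos h.Θ0 (Real.sqrt_pos.2 h.lam0)
  have hβ : 0 ≤ lam⁻¹ := inv_nonneg.2 h.lam0.le
  have hex : ∀ y, ∃ B, ‖y‖ ≤ R → GoodInv (A y) B lam⁻¹ ρ := by
    intro y
    by_cases hy : ‖y‖ ≤ R
    · obtain ⟨B, hB⟩ := exists_goodInv h.lam0 (h.symm y hy) (h.coer y hy) (h.nrm y hy)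
      exact ⟨B, fun _ => hB⟩
    · exact ⟨0, fun hh => absurd hh hy⟩
  choose B hB using hex
  have h0R : ‖(0 : Euc d)‖ ≤ R := by simpa using h.R0.le
  have k0 := KPair_base (hB 0 h0R) hρ
  have k3 := k0.succ.succ.succ
  have k4 := k3.succ
  obtain ⟨C3, hC3⟩ := exists_bd k3.cχ k3.sχ
  obtain ⟨C4, hC4⟩ := exists_bd k4.cχ k4.sχ
  have hC30 : 0 ≤ C3 := le_trans (norm_nonneg _) (hC3 0)
  have hC40 : 0 ≤ C4 := le_trans (norm_nonneg _) (hC4 0)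
  set V := (volume (closedBall (0 : Euc d) ρ)).toReal with hV
  have hV0 : 0 ≤ V := ENNReal.toReal_nonneg
  have hM := h.M0
  have hα := h.α0
  have hα1 : 0 < 1 - α := by linarith [h.α1]
  set CW := M * (1 + ρ) ^ 2 * (1 + d) * (2 * L * (lam⁻¹ * ρ) ^ 2 + lam⁻¹) * V / α
        + L * (lam⁻¹ ^ 2 * M * ρ ^ 2) * (2 * (1 + ρ)) * V with hCW
  set CJ := M * (1 + ρ) ^ 2 * (1 + d) * C3 * V / α with hCJ
  set CQ := M * (1 + ρ) ^ 2 * (1 + d) * C4 * V / (1 - α) with hCQ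
  have hCW0 : 0 ≤ CW := by positivity
  have hCJ0 : 0 ≤ CJ := by positivity
  have hCQ0 : 0 ≤ CQ := by positivity
  have data : StageData (hess u) (Iav u 2 (fderiv ℝ (fderiv ℝ (phiB (B 0)))))
      (Iav u 3 (fderiv ℝ (fderiv ℝ (fderiv ℝ (phiB (B 0))))))
      (Iav u 4 (fderiv ℝ (fderiv ℝ (fderiv ℝ (fderiv ℝ (phiB (B 0)))))))
      (∫ z, phiB (B 0) z) (CW + CJ + CQ) α (1 + ρ) R := by
    refine ⟨c0_pos k0.sφ, by positivity, h.α0, h.α1, by linarith, h.R0, hess_cont h.hu, h.zero,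
      ?_, ?_, ?_, ?_, ?_, ?_, ?_⟩
    · intro ε K hε hK hyp t y ht hεt htR hy
      have := h.hW hρ hL0 hL hL1 hL2 hβ hB hK hyp ht hεt htR hy
      refine this.trans ?_
      have : CW ≤ CW + CJ + CQ := by linarith
      gcongr
    · intro ε K hε hK hyp s r y hs hεs hsr hr hy
      have := h.JQ hρ k3 (fun c l => affine_kill (cfd k0.cχ) (cpt_of_sub (tsf k0.sχ)) c l)
        hC3 hK hyp hs hεs hsr hr hy (γ := α) (by push_cast; ring) hα.ne'
      refine this.trans ?_
      have hs1 : 0 ≤ s ^ α := Real.rpow_nonneg hs.le _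
      have hr1 : 0 ≤ r ^ α := Real.rpow_nonneg (hs.le.trans hsr) _
      calc M * (1 + ρ) ^ 2 * (1 + d) * (1 + K) * C3 * V * ((r ^ α - s ^ α) / α)
          ≤ M * (1 + ρ) ^ 2 * (1 + d) * (1 + K) * C3 * V * (r ^ α / α) := by
            gcongr
            linarith
        _ = CJ * (1 + K) * r ^ α := by rw [hCJ]; ring
        _ ≤ (CW + CJ + CQ) * (1 + K) * r ^ α := by gcongr; linarith
    · intro ε K hε hK hyp s r y hs hεs hsr hr hy
      have := h.JQ hρ k4 (fun c l => affine_kill (cfd (cfd k0.cχ))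
        (cpt_of_sub (tsf (tsf k0.sχ))) c l)
        hC4 hK hyp hs hεs hsr hr hy (γ := α - 1) (by push_cast; ring) (by linarith)
      refine this.trans ?_
      have hs1 : 0 ≤ s ^ (α - 1) := Real.rpow_nonneg hs.le _
      have hr1 : 0 ≤ r ^ (α - 1) := Real.rpow_nonneg (hs.le.trans hsr) _
      have e : (r ^ (α - 1) - s ^ (α - 1)) / (α - 1) ≤ s ^ (α - 1) / (1 - α) := by
        have e0 : (r ^ (α - 1) - s ^ (α - 1)) / (α - 1)
            = (s ^ (α - 1) - r ^ (α - 1)) / (1 - α) := by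
          rw [div_eq_div_iff (by linarith) (by linarith)]
          ring
        rw [e0]
        gcongr
        linarith
      calc M * (1 + ρ) ^ 2 * (1 + d) * (1 + K) * C4 * V * ((r ^ (α - 1) - s ^ (α - 1)) / (α - 1))
          ≤ M * (1 + ρ) ^ 2 * (1 + d) * (1 + K) * C4 * V * (s ^ (α - 1) / (1 - α)) := by
            gcongr
        _ = CQ * (1 + K) * s ^ (α - 1) := by rw [hCQ]; ring
        _ ≤ (CW + CJ + CQ) * (1 + K) * s ^ (α - 1) := by gcongr; linarith
    · intro t v τ ht
      exact line_deriv (h.hu.of_le (by norm_num)) k0.succ.succ.cφ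
        (cpt_of_sub k0.succ.succ.sφ) v ht τ 2
    · intro t v τ ht
      exact line_deriv (h.hu.of_le (by norm_num)) k3.cφ (cpt_of_sub k3.sφ) v ht τ 3
    · intro r hr
      exact Iav_bdd h.hu.continuous k3.cφ k3.sφ hr
    · intro r hr
      exact Iav_bdd h.hu.continuous k4.cφ k4.sφ hr
  exact data.stage2

end AssembleSec
section AppSec

set_option maxSynthPendingDepth 3

variable {d : ℕ} {F G H : Type*} [NormedAddCommGroup F] [NormedSpace ℝ F]
  [NormedAddCommGroup G] [NormedSpace ℝ G] [NormedAddCommGroup H] [NormedSpace ℝ H]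

/-- Pointwise Hölder continuity at the origin. -/
def PH (p : Euc d → F) (α R : ℝ) : Prop :=
  ∃ M : ℝ, 0 ≤ M ∧ ∀ x, ‖x‖ ≤ R → ‖p x - p 0‖ ≤ M * ‖x‖ ^ α

theorem PH.sub {p q : Euc d → F} {α R : ℝ} (hp : PH p α R) (hq : PH q α R) :
    PH (fun x => p x - q x) α R := by
  obtain ⟨M, hM, h1⟩ := hp
  obtain ⟨N, hN, h2⟩ := hq
  refine ⟨M + N, by positivity, fun x hx => ?_⟩
  have e : p x - q x - (p 0 - q 0) = (p x - p 0) - (q x - q 0) := by abel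
  rw [e, add_mul]
  exact (norm_sub_le _ _).trans (add_le_add (h1 x hx) (h2 x hx))

theorem PH.add {p q : Euc d → F} {α R : ℝ} (hp : PH p α R) (hq : PH q α R) :
    PH (fun x => p x + q x) α R := by
  obtain ⟨M, hM, h1⟩ := hp
  obtain ⟨N, hN, h2⟩ := hq
  refine ⟨M + N, by positivity, fun x hx => ?_⟩
  have e : p x + q x - (p 0 + q 0) = (p x - p 0) + (q x - q 0) := by abel
  rw [e, add_mul]
  exact (norm_add_le _ _).trans (add_le_add (h1 x hx) (h2 x hx))

theorem PH.bdd {p : Euc d → F} {α R : ℝ} (hα : 0 ≤ α) (hR : R ≤ 1) (hp : PH p α R) :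
    ∃ K : ℝ, 0 ≤ K ∧ ∀ x, ‖x‖ ≤ R → ‖p x‖ ≤ K := by
  obtain ⟨M, hM, h1⟩ := hp
  refine ⟨M + ‖p 0‖, by positivity, fun x hx => ?_⟩
  have a := h1 x hx
  have b : ‖x‖ ^ α ≤ 1 := Real.rpow_le_one (norm_nonneg _) (hx.trans hR) hα
  have e : p x = (p x - p 0) + p 0 := by abel
  rw [e]
  refine (norm_add_le _ _).trans (add_le_add (a.trans ?_) le_rfl)
  nlinarith

theorem PH.bil {p : Euc d → F} {q : Euc d → G} {α R : ℝ} (hα : 0 ≤ α) (hR : R ≤ 1)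
    (hp : PH p α R) (hq : PH q α R) (B : F → G → H) (β : ℝ) (hβ : 0 ≤ β)
    (hB : ∀ a b, ‖B a b‖ ≤ β * ‖a‖ * ‖b‖)
    (hs : ∀ a a' b b', B a b - B a' b' = B (a - a') b + B a' (b - b')) :
    PH (fun x => B (p x) (q x)) α R := by
  obtain ⟨K, hK, hk⟩ := hq.bdd hα hR
  obtain ⟨M, hM, h1⟩ := hp
  obtain ⟨N, hN, h2⟩ := hq
  refine ⟨β * M * K + β * ‖p 0‖ * N, by positivity, fun x hx => ?_⟩
  rw [hs]
  refine (norm_add_le _ _).trans ?_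
  have a1 := hB (p x - p 0) (q x)
  have a2 := hB (p 0) (q x - q 0)
  have hx0 : 0 ≤ ‖x‖ ^ α := Real.rpow_nonneg (norm_nonneg _) _
  calc _ ≤ β * (M * ‖x‖ ^ α) * K + β * ‖p 0‖ * (N * ‖x‖ ^ α) := by
        refine add_le_add (a1.trans ?_) (a2.trans ?_)
        · gcongr
          · exact h1 x hx
          · exact hk x hx
        · gcongr
          exact h2 x hx
    _ = _ := by ring

theorem PH.of_diff {p : Euc d → F} {α R : ℝ} (hα : α ≤ 1) (hR0 : 0 ≤ R) (hR : R ≤ 1)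
    (hp : ∀ x, ‖x‖ ≤ R → DifferentiableAt ℝ p x) {K : ℝ}
    (hK : ∀ x, ‖x‖ ≤ R → ‖fderiv ℝ p x‖ ≤ K) : PH p α R := by
  have hK0 : 0 ≤ K := le_trans (norm_nonneg (fderiv ℝ p 0)) (hK 0 (by simpa using hR0))
  refine ⟨K, hK0, fun x hx => ?_⟩
  have := (convex_closedBall (0 : Euc d) R).norm_image_sub_le_of_norm_hasFDerivWithin_le
    (f := p) (f' := fderiv ℝ p) (C := K) (x := 0) (y := x)
    (fun z hz => (hp z (by simpa using hz)).hasFDerivAt.hasFDerivWithinAt)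
    (fun z hz => hK z (by simpa using hz)) (by simpa using hR0) (by simpa using hx)
  refine this.trans ?_
  rw [sub_zero]
  gcongr
  exact Real.self_le_rpow_of_le_one (norm_nonneg _) (hx.trans hR) hα

theorem PH.of_holder {p : Euc d → F} {α R r : ℝ} (hr : R < r) (hR0 : 0 ≤ R)
    (hp : HolderOnE p α (ball (0 : Euc d) r)) : PH p α R := by
  obtain ⟨M, h⟩ := hp
  refine ⟨|M|, abs_nonneg _, fun x hx => ?_⟩
  have := h x (by simpa using hx.trans_lt hr) 0 (by simpa using hR0.trans_lt hr)
  rw [sub_zero] at this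
  refine this.trans ?_
  have hx0 : 0 ≤ ‖x‖ ^ α := Real.rpow_nonneg (norm_nonneg _) _
  gcongr
  exact le_abs_self _

theorem loc1 {r R lam α : ℝ} (hlam : 0 < lam) (hα : 0 < α) (hα1 : α < 1) (hR0 : 0 < R) (hR1 : R ≤ 1)
    (hRr : R < r)
    {A : Euc d → Euc d →L[ℝ] Euc d} {b : Euc d → Euc d} {c f u : Euc d → ℝ}
    (hAsymm : ∀ x, ‖x‖ < r → ∀ ξ η : Euc d, ⟪A x ξ, η⟫ = ⟪ξ, A x η⟫)
    (hell : ∀ x, ‖x‖ < r → ∀ ξ : Euc d, lam * ‖ξ‖ ^ 2 ≤ ⟪A x ξ, ξ⟫)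
    (hAH : HolderOnE A α (ball 0 r))
    (hb : ∀ x, ‖x‖ < r → DifferentiableAt ℝ b x) (hbH : HolderOnE (fderiv ℝ b) α (ball 0 r))
    (hc : ∀ x, ‖x‖ < r → DifferentiableAt ℝ c x) (hcH : HolderOnE (fderiv ℝ c) α (ball 0 r))
    (hf : ∀ x, ‖x‖ < r → DifferentiableAt ℝ f x) (hfH : HolderOnE (fderiv ℝ f) α (ball 0 r))
    (hu : ContDiff ℝ 2 u) (h0 : hess u 0 = 0)
    (hsol : ∀ x, ‖x‖ ≤ R →
      (∑ i : Fin d, hess u x (A x (EuclideanSpace.single i 1)) (EuclideanSpace.single i 1))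
        + fderiv ℝ u x (b x) + c x * u x = f x) :
    ∃ (S : Euc d →L[ℝ] Euc d →L[ℝ] Euc d →L[ℝ] ℝ) (C' δ : ℝ), 0 < C' ∧ 0 < δ ∧
      ∀ y, ‖y‖ ≤ δ → ‖hess u y - S y‖ ≤ C' * ‖y‖ ^ (1 + α) := by
  have lt : ∀ x : Euc d, ‖x‖ ≤ R → ‖x‖ < r := fun x hx => hx.trans_lt hRr
  have pA : PH A α R := .of_holder hRr hR0.le hAH
  have pDb : PH (fderiv ℝ b) α R := .of_holder hRr hR0.le hbH
  have pDc : PH (fderiv ℝ c) α R := .of_holder hRr hR0.le hcH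
  have pDf : PH (fderiv ℝ f) α R := .of_holder hRr hR0.le hfH
  obtain ⟨K1, -, hK1⟩ := pDb.bdd hα.le hR1
  obtain ⟨K2, -, hK2⟩ := pDc.bdd hα.le hR1
  have pb : PH b α R := .of_diff hα1.le hR0.le hR1 (fun x hx => hb x (lt x hx)) hK1
  have pc : PH c α R := .of_diff hα1.le hR0.le hR1 (fun x hx => hc x (lt x hx)) hK2
  have hu1 : ContDiff ℝ 1 (fderiv ℝ u) := hu.fderiv_right (by norm_num)
  have hud : Differentiable ℝ u := hu.differentiable (by norm_num)
  have hud1 : Differentiable ℝ (fderiv ℝ u) := hu1.differentiable (by norm_num)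
  have cb : ∀ {F' : Type} [NormedAddCommGroup F'] (q : Euc d → F'), Continuous q →
      ∃ K, ∀ x, ‖x‖ ≤ R → ‖q x‖ ≤ K := by
    intro F' _ q hq
    obtain ⟨K, hK⟩ := (isCompact_closedBall (0 : Euc d) R).exists_bound_of_continuousOn
      hq.continuousOn
    exact ⟨K, fun x hx => hK x (by simpa using hx)⟩
  obtain ⟨K3, hK3⟩ := cb (fderiv ℝ u) hu1.continuous
  obtain ⟨K4, hK4⟩ := cb (fderiv ℝ (fderiv ℝ u)) (hu1.continuous_fderiv (by norm_num))
  have pu : PH u α R := .of_diff hα1.le hR0.le hR1 (fun x hx => hud x) hK3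
  have pDu : PH (fderiv ℝ u) α R := .of_diff hα1.le hR0.le hR1 (fun x hx => hud1 x) hK4
  have p1 : PH (fun x => (fderiv ℝ u x).comp (fderiv ℝ b x)) α R := by
    refine pDu.bil hα.le hR1 pDb (fun a b => a.comp b) 1 zero_le_one ?_ ?_
    · intro a b
      rw [one_mul]
      exact ContinuousLinearMap.opNorm_comp_le a b
    · intro a a' b b'
      ext v
      simp
  have p2 : PH (fun x => c x • fderiv ℝ u x) α R := by
    refine pc.bil hα.le hR1 pDu (fun a b => a • b) 1 zero_le_one ?_ ?_
    · intro a b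
      rw [one_mul, norm_smul]
    · intro a a' b b'
      ext v
      simp
      ring
  have p3 : PH (fun x => u x • fderiv ℝ c x) α R := by
    refine pu.bil hα.le hR1 pDc (fun a b => a • b) 1 zero_le_one ?_ ?_
    · intro a b
      rw [one_mul, norm_smul]
    · intro a a' b b'
      ext v
      simp
      ring
  have pq := (pDf.sub p1).sub (p2.add p3)
  obtain ⟨Kb, hKb0, hKb⟩ := pb.bdd hα.le hR1
  obtain ⟨Mq, hMq0, hMq⟩ := pq
  obtain ⟨KA, hKA0, hKA⟩ := pA.bdd hα.le hR1
  obtain ⟨MA, hMA⟩ := hAH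
  set l : Euc d →L[ℝ] ℝ := fderiv ℝ f 0 - (fderiv ℝ u 0).comp (fderiv ℝ b 0)
    - (c 0 • fderiv ℝ u 0 + u 0 • fderiv ℝ c 0) with hl
  set g : Euc d → ℝ := fun x => f x - fderiv ℝ u x (b x) - c x * u x with hg
  have core : Core u g A l lam (KA + 1) (|MA| + Mq + Kb) α R := by
    refine ⟨hu, h0, ?_, ?_, fun x hx => hAsymm x (lt x hx), fun x hx => hell x (lt x hx), ?_, ?_,
      hlam, by linarith, by positivity, hα, hα1, hR0, hR1⟩
    · intro x hx
      have := hsol x hx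
      simp only [hg, bvec]
      linarith
    · intro x y hx hy
      have := hMA x (by simpa using lt x hx) y (by simpa using lt y hy)
      refine this.trans ?_
      have : 0 ≤ ‖x - y‖ ^ α := Real.rpow_nonneg (norm_nonneg _) _
      gcongr
      linarith [le_abs_self MA]
    · intro x hx
      linarith [hKA x hx]
    · intro τ N hτ hτR hN x y hx hy
      have hN0 : 0 ≤ N := le_trans (norm_nonneg (hess u 0)) (hN 0 (by simpa using hτ))
      have hder : ∀ z, ‖z‖ ≤ τ → HasFDerivAt (fun z => g z - l z)
          ((fderiv ℝ f z - (fderiv ℝ u z).comp (fderiv ℝ b z)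
            - (c z • fderiv ℝ u z + u z • fderiv ℝ c z)) - l - (hess u z).flip (b z)) z := by
        intro z hz
        have hzr := lt z (hz.trans hτR)
        have d1 := (hf z hzr).hasFDerivAt
        have d2 := (hud1 z).hasFDerivAt.clm_apply (hb z hzr).hasFDerivAt
        have d3 := (hc z hzr).hasFDerivAt.mul (hud z).hasFDerivAt
        refine (((d1.sub d2).sub d3).sub l.hasFDerivAt).congr_fderiv ?_
        ext v
        simp [hess]
        ring
      have hbd : ∀ z, ‖z‖ ≤ τ → ‖(fderiv ℝ f z - (fderiv ℝ u z).comp (fderiv ℝ b z)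
            - (c z • fderiv ℝ u z + u z • fderiv ℝ c z)) - l - (hess u z).flip (b z)‖
          ≤ (|MA| + Mq + Kb) * (τ ^ α + N) := by
        intro z hz
        have a1 := hMq z (hz.trans hτR)
        have a2 : ‖(hess u z).flip (b z)‖ ≤ N * Kb := by
          refine ((hess u z).flip.le_opNorm (b z)).trans ?_
          rw [ContinuousLinearMap.opNorm_flip]
          exact mul_le_mul (hN z hz) (hKb z (hz.trans hτR)) (norm_nonneg _) hN0
        have a3 : ‖z‖ ^ α ≤ τ ^ α := Real.rpow_le_rpow (norm_nonneg _) hz hα.le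
        have a4 : 0 ≤ τ ^ α := Real.rpow_nonneg hτ _
        refine (norm_sub_le _ _).trans ((add_le_add a1 a2).trans ?_)
        have := mul_le_mul_of_nonneg_left a3 hMq0
        have := abs_nonneg MA
        nlinarith [mul_nonneg this a4, mul_nonneg this hN0, mul_nonneg hMq0 hN0,
          mul_nonneg hKb0 a4]
      have := (convex_closedBall (0 : Euc d) τ).norm_image_sub_le_of_norm_hasFDerivWithin_le
        (f := fun z => g z - l z) (x := y) (y := x)
        (fun z hz => (hder z (by simpa using hz)).hasFDerivWithinAt)
        (fun z hz => hbd z (by simpa using hz)) (by simpa using hy) (by simpa using hx)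
      rw [Real.norm_eq_abs] at this
      have e : g x - g y - l (x - y) = g x - l x - (g y - l y) := by rw [map_sub]; ring
      rw [e]
      exact this
  exact core.conclusion

theorem hess_congr {u v : Euc d → ℝ} {x : Euc d} (h : u =ᶠ[𝓝 x] v) : hess u x = hess v x :=
  (h.fderiv (𝕜 := ℝ)).fderiv_eq

theorem hess_shift (u : Euc d → ℝ) (x₀ x : Euc d) :
    hess (fun y => u (x₀ + y)) x = hess u (x₀ + x) := by
  unfold hess
  have : (fun y => fderiv ℝ (fun y => u (x₀ + y)) y) = fun y => fderiv ℝ u (x₀ + y) := by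
    ext1 y
    exact fderiv_comp_add_left x₀
  rw [this]
  exact fderiv_comp_add_left (f := fderiv ℝ u) x₀

theorem loc2 {r lam α : ℝ} (hlam : 0 < lam) (hα : 0 < α) (hα1 : α < 1) (hr : 0 < r)
    {A : Euc d → Euc d →L[ℝ] Euc d} {b : Euc d → Euc d} {c f u : Euc d → ℝ}
    (hAsymm : ∀ x, ‖x‖ < r → ∀ ξ η : Euc d, ⟪A x ξ, η⟫ = ⟪ξ, A x η⟫)
    (hell : ∀ x, ‖x‖ < r → ∀ ξ : Euc d, lam * ‖ξ‖ ^ 2 ≤ ⟪A x ξ, ξ⟫)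
    (hAH : HolderOnE A α (ball 0 r))
    (hb : ∀ x, ‖x‖ < r → DifferentiableAt ℝ b x) (hbH : HolderOnE (fderiv ℝ b) α (ball 0 r))
    (hc : ∀ x, ‖x‖ < r → DifferentiableAt ℝ c x) (hcH : HolderOnE (fderiv ℝ c) α (ball 0 r))
    (hf : ∀ x, ‖x‖ < r → DifferentiableAt ℝ f x) (hfH : HolderOnE (fderiv ℝ f) α (ball 0 r))
    (hu : ∀ x, ‖x‖ < r → ContDiffAt ℝ 2 u x) (h0 : hess u 0 = 0)
    (hsol : ∀ x, ‖x‖ < r →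
      (∑ i : Fin d, hess u x (A x (EuclideanSpace.single i 1)) (EuclideanSpace.single i 1))
        + fderiv ℝ u x (b x) + c x * u x = f x) :
    ∃ (S : Euc d →L[ℝ] Euc d →L[ℝ] Euc d →L[ℝ] ℝ) (C' δ : ℝ), 0 < C' ∧ 0 < δ ∧
      ∀ y, ‖y‖ ≤ δ → ‖hess u y - S y‖ ≤ C' * ‖y‖ ^ (1 + α) := by
  let η : ContDiffBump (0 : Euc d) := ⟨r / 2, 3 * r / 4, by positivity, by linarith⟩
  have hv : ContDiff ℝ 2 (fun x => η x * u x) := by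
    refine contDiff_iff_contDiffAt.2 fun x => ?_
    by_cases hx1 : x ∈ tsupport η
    · rw [η.tsupport_eq] at hx1
      have hx2 : ‖x‖ ≤ 3 * r / 4 := by simpa using hx1
      exact (η.contDiff (n := 2)).contDiffAt.mul (hu x (by linarith))
    · have hz : (fun x => η x * u x) =ᶠ[𝓝 x] fun _ => (0 : ℝ) := by
        filter_upwards [notMem_tsupport_iff_eventuallyEq.1 hx1] with y hy
        rw [hy, Pi.zero_apply, zero_mul]
      exact contDiffAt_const.congr_of_eventuallyEq hz
  have hev : ∀ x, ‖x‖ < r / 2 → (fun x => η x * u x) =ᶠ[𝓝 x] u := by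
    intro x hx
    have : ball (0 : Euc d) (r / 2) ∈ 𝓝 x := isOpen_ball.mem_nhds (by simpa using hx)
    filter_upwards [this] with y hy
    rw [η.one_of_mem_closedBall (ball_subset_closedBall hy), one_mul]
  have hR0 : 0 < min (r / 4) 1 := lt_min (by linarith) one_pos
  have hR4 : min (r / 4) 1 ≤ r / 4 := min_le_left _ _
  obtain ⟨S, C', δ, hC, hδ, H⟩ := loc1 (R := min (r / 4) 1) hlam hα hα1 hR0 (min_le_right _ _)
    (by linarith) hAsymm hell hAH hb hbH hc hcH hf hfH hv
    (by rw [hess_congr (hev 0 (by simpa using hr)), h0])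
    (fun x hx => by
      have e := hev x (by linarith)
      rw [hess_congr e, e.fderiv_eq, e.eq_of_nhds]
      exact hsol x (by linarith))
  refine ⟨S, C', min δ (r / 4), hC, lt_min hδ (by linarith), fun y hy => ?_⟩
  have := H y (hy.trans (min_le_left _ _))
  rwa [hess_congr (hev y (by linarith [hy.trans (min_le_right _ _)]))] at this

theorem HolderOnE.shift {p : Euc d → F} {α r : ℝ} {Ω : Set (Euc d)} {x₀ : Euc d}
    (h : HolderOnE p α Ω) (hr : ∀ x, ‖x‖ < r → x₀ + x ∈ Ω) :
    HolderOnE (fun x => p (x₀ + x)) α (ball 0 r) := by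
  obtain ⟨M, hM⟩ := h
  refine ⟨M, fun x hx y hy => ?_⟩
  have := hM _ (hr x (by simpa using hx)) _ (hr y (by simpa using hy))
  rwa [add_sub_add_left_eq_sub] at this

theorem HolderOnE.shift_fderiv {p : Euc d → F} {α r : ℝ} {Ω : Set (Euc d)} {x₀ : Euc d}
    (h : HolderOnE (fun x => fderiv ℝ p x) α Ω) (hr : ∀ x, ‖x‖ < r → x₀ + x ∈ Ω) :
    HolderOnE (fderiv ℝ (fun x => p (x₀ + x))) α (ball 0 r) := by
  have := h.shift hr
  have e : fderiv ℝ (fun x => p (x₀ + x)) = fun x => fderiv ℝ p (x₀ + x) := by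
    ext1 y
    exact fderiv_comp_add_left x₀
  rw [e]
  exact this

theorem hasFDeriv_of_rpow {p : Euc d → F} {S : Euc d →L[ℝ] F} {x₀ : Euc d} {C δ α : ℝ}
    (hα : 0 < α) (hδ : 0 < δ) (h0 : p x₀ = 0)
    (H2 : ∀ x : Euc d, ‖x - x₀‖ ≤ δ → ‖p x - S (x - x₀)‖ ≤ C * ‖x - x₀‖ ^ (1 + α)) :
    HasFDerivAt p S x₀ := by
  rw [hasFDerivAt_iff_isLittleO, Asymptotics.isLittleO_iff]
  intro ε hε
  have ht : Tendsto (fun x : Euc d => C * ‖x - x₀‖ ^ α) (𝓝 x₀) (𝓝 0) := by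
    have c1 : Continuous (fun x : Euc d => C * ‖x - x₀‖ ^ α) :=
      continuous_const.mul ((continuous_id.sub continuous_const).norm.rpow_const
        fun _ => Or.inr hα.le)
    have := c1.tendsto x₀
    simpa [Real.zero_rpow hα.ne'] using this
  filter_upwards [ht.eventually (gt_mem_nhds hε), closedBall_mem_nhds x₀ hδ] with x h1 h2
  rw [h0, sub_zero]
  refine (H2 x (by simpa [dist_eq_norm] using h2)).trans ?_
  rw [Real.rpow_add' (norm_nonneg _) (by linarith), Real.rpow_one]
  have := norm_nonneg (x - x₀)
  nlinarith

end AppSec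
/-- `C^{3,α}` regularity at Hessian-vanishing points for non-divergence form
equations with `A ∈ C^α` and `b, c, f ∈ C^{1,α}`. -/
theorem stmt3 {d : ℕ} (hd : 2 ≤ d) (Ω : Set (Euc d)) (hΩo : IsOpen Ω) (hΩc : IsConnected Ω)
    (lam Lam : ℝ) (hlam : 0 < lam) (hLamlam : lam ≤ Lam)
    (α : ℝ) (hα : α ∈ Set.Ioo (0 : ℝ) 1)
    (A : Euc d → Euc d →L[ℝ] Euc d) (b : Euc d → Euc d) (c f : Euc d → ℝ)
    (hAsymm : ∀ x ∈ Ω, ∀ ξ η : Euc d, ⟪A x ξ, η⟫ = ⟪ξ, A x η⟫)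
    (hell : ∀ x ∈ Ω, ∀ ξ : Euc d, lam * ‖ξ‖ ^ 2 ≤ ⟪A x ξ, ξ⟫ ∧ ⟪A x ξ, ξ⟫ ≤ Lam * ‖ξ‖ ^ 2)
    (hAH : HolderOnE A α Ω)
    (hbdiff : DifferentiableOn ℝ b Ω) (hbH : HolderOnE (fun x => fderiv ℝ b x) α Ω)
    (hcdiff : DifferentiableOn ℝ c Ω) (hcH : HolderOnE (fun x => fderiv ℝ c x) α Ω)
    (hfdiff : DifferentiableOn ℝ f Ω) (hfH : HolderOnE (fun x => fderiv ℝ f x) α Ω)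
    (u : Euc d → ℝ) (hu : ContDiffOn ℝ 2 u Ω)
    (hsol : ∀ x ∈ Ω,
      (∑ i : Fin d, hess u x (A x (EuclideanSpace.single i 1)) (EuclideanSpace.single i 1))
        + ⟪b x, gradient u x⟫ + c x * u x = f x)
    (x₀ : Euc d) (hx₀ : x₀ ∈ Ω) (hcrit : hess u x₀ = 0) :
    DifferentiableAt ℝ (fun y => hess u y) x₀ ∧
    ∃ C : ℝ, 0 < C ∧ ∃ δ : ℝ, 0 < δ ∧
      ∀ x : Euc d, ‖x - x₀‖ < δ →
        ‖hess u x - fderiv ℝ (fun y => hess u y) x₀ (x - x₀)‖ ≤ C * ‖x - x₀‖ ^ (1 + α) := by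
  obtain ⟨r, hr, hrΩ⟩ := Metric.isOpen_iff.1 hΩo x₀ hx₀
  have hin : ∀ x : Euc d, ‖x‖ < r → x₀ + x ∈ Ω := fun x hx => hrΩ (by simpa using hx)
  have nb : ∀ x : Euc d, ‖x‖ < r → Ω ∈ 𝓝 (x₀ + x) := fun x hx => hΩo.mem_nhds (hin x hx)
  have sd : ∀ {F : Type} [NormedAddCommGroup F] [NormedSpace ℝ F] {p : Euc d → F},
      DifferentiableOn ℝ p Ω → ∀ x, ‖x‖ < r → DifferentiableAt ℝ (fun x => p (x₀ + x)) x := by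
    intro F _ _ p hp x hx
    exact (differentiableAt_comp_add_left x₀).2 (hp.differentiableAt (nb x hx))
  obtain ⟨S, C, δ, hC, hδ, H⟩ := loc2 (u := fun x => u (x₀ + x)) hlam hα.1 hα.2 hr
    (fun x hx => hAsymm _ (hin x hx)) (fun x hx ξ => (hell _ (hin x hx) ξ).1)
    (hAH.shift hin) (sd hbdiff) (hbH.shift_fderiv hin) (sd hcdiff) (hcH.shift_fderiv hin)
    (sd hfdiff) (hfH.shift_fderiv hin)
    (fun x hx => ContDiffAt.comp x (g := u) (f := fun x => x₀ + x) (hu.contDiffAt (nb x hx))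
      (contDiffAt_const.add contDiffAt_id))
    (by rw [hess_shift, add_zero, hcrit])
    (fun x hx => by
      have h1 := hsol _ (hin x hx)
      have h2 : fderiv ℝ (fun x => u (x₀ + x)) x = fderiv ℝ u (x₀ + x) :=
        fderiv_comp_add_left x₀
      rw [hess_shift, h2]
      have h3 : ⟪b (x₀ + x), gradient u (x₀ + x)⟫ = fderiv ℝ u (x₀ + x) (b (x₀ + x)) := by
        rw [real_inner_comm, gradient, InnerProductSpace.toDual_symm_apply]
      rw [h3] at h1
      exact h1)
  have H2 : ∀ x : Euc d, ‖x - x₀‖ ≤ δ → ‖hess u x - S (x - x₀)‖ ≤ C * ‖x - x₀‖ ^ (1 + α) := by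
    intro x hx
    have := H (x - x₀) hx
    rwa [hess_shift, add_sub_cancel] at this
  have hD : HasFDerivAt (fun y => hess u y) S x₀ :=
    hasFDeriv_of_rpow (p := fun y => hess u y) hα.1 hδ hcrit H2
  refine ⟨hD.differentiableAt, C, hC, δ, hδ, fun x hx => ?_⟩
  rw [hD.fderiv]
  exact H2 x hx.le
end

section
/- There exists a constant c(d) > 0, depending only on the dimension d, such that for every symmetric d×d real matrix S and every r > 0, ⨍_{B_r(0)} |Sx|^{1/2} dx ≥ c(d) (r |S|)^{1/2}, where |S| := sup_{|ξ|=1} |Sξ·ξ| is the operator norm of S. -/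
open MeasureTheory Metric Filter
open scoped RealInnerProductSpace ENNReal Topology

/-- lower bound for the averaged square root of `|Sx|` over a ball,
for symmetric matrices `S`. -/
theorem stmt13 (d : ℕ) :
    ∃ c : ℝ, 0 < c ∧
      ∀ S : Euc d →L[ℝ] Euc d, (∀ ξ η : Euc d, ⟪S ξ, η⟫ = ⟪ξ, S η⟫) →
      ∀ r : ℝ, 0 < r →
        c * Real.sqrt (r * ‖S‖) ≤ ⨍ x in ball (0 : Euc d) r, Real.sqrt ‖S x‖ := by
  refine ⟨(1 / 8) ^ d * Real.sqrt (1 / 8), by positivity, ?_⟩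
  intro S _ r hr
  by_cases hS : ‖S‖ = 0
  · have h0 : S = 0 := norm_eq_zero.mp hS
    subst h0
    simp
  have hSpos : 0 < ‖S‖ := lt_of_le_of_ne (norm_nonneg _) (Ne.symm hS)
  obtain ⟨e, he, hSe⟩ := S.exists_lt_apply_of_lt_opNorm (show ‖S‖ / 2 < ‖S‖ by linarith)
  set z : Euc d := (r / 2) • e with hz
  have hzn : ‖z‖ ≤ r / 2 := by
    rw [hz, norm_smul, Real.norm_of_nonneg (by positivity)]
    nlinarith
  have hSz : r / 2 * (‖S‖ / 2) ≤ ‖S z‖ := by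
    rw [hz, map_smul, norm_smul, Real.norm_of_nonneg (by positivity : 0 ≤ r / 2)]
    gcongr
  have hsub : ball z (r / 8) ⊆ ball (0 : Euc d) r := by
    apply ball_subset_ball'
    rw [dist_zero_right]
    linarith
  have hlow : ∀ x ∈ ball z (r / 8), Real.sqrt (1 / 8) * Real.sqrt (r * ‖S‖) ≤ Real.sqrt ‖S x‖ := by
    intro x hx
    rw [← Real.sqrt_mul (by norm_num)]
    apply Real.sqrt_le_sqrt
    have h1 : ‖S (z - x)‖ ≤ ‖S‖ * (r / 8) := by
      refine (S.le_opNorm _).trans ?_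
      gcongr
      rw [mem_ball, dist_comm, dist_eq_norm] at hx
      exact hx.le
    have h2 : ‖S z‖ - ‖S x‖ ≤ ‖S (z - x)‖ := by
      rw [map_sub]
      exact norm_sub_norm_le _ _
    nlinarith
  have hcont : Continuous fun x : Euc d => Real.sqrt ‖S x‖ := by fun_prop
  have hint : IntegrableOn (fun x : Euc d => Real.sqrt ‖S x‖) (ball 0 r) :=
    (hcont.continuousOn.integrableOn_compact (isCompact_closedBall (0 : Euc d) r)).mono_set
      ball_subset_closedBall
  have hvol : ∀ (x : Euc d) (t : ℝ), 0 < t →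
      volume.real (ball x t) = t ^ d * volume.real (ball (0 : Euc d) 1) := by
    intro x t ht
    rw [Measure.real, Measure.addHaar_ball_of_pos _ _ ht, ENNReal.toReal_mul,
      ENNReal.toReal_ofReal (by positivity), finrank_euclideanSpace_fin, Measure.real]
  have hV : 0 < volume.real (ball (0 : Euc d) 1) :=
    ENNReal.toReal_pos (measure_ball_pos _ _ one_pos).ne' measure_ball_lt_top.ne
  have h1 : Real.sqrt (1 / 8) * Real.sqrt (r * ‖S‖) * volume.real (ball z (r / 8)) ≤
      ∫ x in ball z (r / 8), Real.sqrt ‖S x‖ :=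
    setIntegral_ge_of_const_le_real measurableSet_ball measure_ball_lt_top.ne hlow
      (hint.mono_set hsub)
  have h2 : ∫ x in ball z (r / 8), Real.sqrt ‖S x‖ ≤ ∫ x in ball (0 : Euc d) r, Real.sqrt ‖S x‖ :=
    setIntegral_mono_set hint (Eventually.of_forall fun x => Real.sqrt_nonneg _)
      hsub.eventuallyLE
  rw [setAverage_eq, smul_eq_mul, inv_mul_eq_div, hvol 0 r hr, le_div_iff₀ (by positivity)]
  refine le_trans (le_of_eq ?_) (h1.trans h2)
  rw [hvol z _ (by positivity), div_eq_mul_one_div r 8, mul_pow]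
  ring
end

section
/- There exists a constant c(d) > 0, depending only on the dimension d, such that for every symmetric (0,3)-tensor 𝒮 on ℝ^d and every r > 0, ⨍_{B_r(0)} |⟨𝒮,x⟩|^{1/2} dx ≥ c(d) (r |𝒮|)^{1/2}, where ⟨𝒮,x⟩ denotes the d×d symmetric matrix with entries (⟨𝒮,x⟩)_{i,j} = x_k 𝒮^{i,j,k}, |⟨𝒮,x⟩| is its operator norm, and |𝒮| := sup_{|ξ|=1} |𝒮(ξ,ξ,ξ)|. -/
open MeasureTheory Metric Filter
open scoped RealInnerProductSpace ENNReal Topology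

theorem stmt14_sqrt_add {a b : ℝ} (ha : 0 ≤ a) (hb : 0 ≤ b) :
    Real.sqrt (a + b) ≤ Real.sqrt a + Real.sqrt b := by
  rw [Real.sqrt_le_left (by positivity), add_sq, Real.sq_sqrt ha, Real.sq_sqrt hb]
  have : 0 ≤ 2 * Real.sqrt a * Real.sqrt b := by positivity
  linarith

theorem stmt14_aux {d : ℕ} (S : Euc d →L[ℝ] Euc d →L[ℝ] Euc d →L[ℝ] ℝ) (r : ℝ) (hr : 0 < r)
    (ξ : Euc d) (hξ : ‖ξ‖ = 1) :
    Real.sqrt (r * |S ξ ξ ξ|) ≤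
      (4 * 2 ^ d) * ⨍ x in ball (0 : Euc d) r, Real.sqrt ‖S x‖ := by
  set f : Euc d → ℝ := fun x => Real.sqrt ‖S x‖ with hf
  have hfc : Continuous f := by
    have h1 : Continuous (fun x => S x) := S.continuous
    have h2 : Continuous (fun T : Euc d →L[ℝ] Euc d →L[ℝ] ℝ => ‖T‖) := by
      exact continuous_norm (E := Euc d →L[ℝ] Euc d →L[ℝ] ℝ)
    exact Real.continuous_sqrt.comp (h2.comp h1)
  have hint : ∀ (y : Euc d) (ρ : ℝ), IntegrableOn f (ball y ρ) := fun y ρ =>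
    (hfc.continuousOn.integrableOn_compact (isCompact_closedBall y ρ)).mono_set
      ball_subset_closedBall
  set h : Euc d := (r / 2) • ξ with hh
  have hhn : ‖h‖ = r / 2 := by rw [hh, norm_smul, hξ, Real.norm_of_nonneg (by positivity), mul_one]
  have hpre : (fun x => x + h) ⁻¹' (ball h (r / 2)) = ball (0 : Euc d) (r / 2) := by
    ext x; simp [mem_ball, dist_eq_norm]
  have hmp := measurePreserving_add_right (volume : Measure (Euc d)) h
  have hem : MeasurableEmbedding (fun x : Euc d => x + h) := measurableEmbedding_addRight h
  have hshift : ∫ x in ball (0 : Euc d) (r / 2), f (x + h) = ∫ x in ball h (r / 2), f x := by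
    rw [← hpre]; exact hmp.setIntegral_preimage_emb hem f _
  have hint2 : IntegrableOn (fun x => f (x + h)) (ball (0 : Euc d) (r / 2)) :=
    ((hfc.comp (continuous_id.add continuous_const)).continuousOn.integrableOn_compact
      (isCompact_closedBall 0 (r / 2))).mono_set ball_subset_closedBall
  have hf0 : ∀ x, 0 ≤ f x := fun x => Real.sqrt_nonneg _
  have hle1 : ∫ x in ball (0 : Euc d) (r / 2), f x ≤ ∫ x in ball (0 : Euc d) r, f x :=
    setIntegral_mono_set (hint 0 r) (Eventually.of_forall hf0)
      (ball_subset_ball (by linarith)).eventuallyLE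
  have hle2 : ∫ x in ball h (r / 2), f x ≤ ∫ x in ball (0 : Euc d) r, f x :=
    setIntegral_mono_set (hint 0 r) (Eventually.of_forall hf0)
      (ball_subset_ball' (by rw [dist_zero_right, hhn]; linarith)).eventuallyLE
  set C : ℝ := Real.sqrt (r / 2 * |S ξ ξ ξ|) with hC
  have hSh : r / 2 * |S ξ ξ ξ| ≤ ‖S h‖ := by
    have h1 := (S h).le_opNorm₂ ξ ξ
    have h2 : S h ξ ξ = r / 2 * S ξ ξ ξ := by simp [hh]
    rw [h2, hξ, mul_one, mul_one, Real.norm_eq_abs, abs_mul, abs_of_pos (by positivity)] at h1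
    exact h1
  have hpt : ∀ x, C ≤ f x + f (x + h) := by
    intro x
    have h2 : ‖S h‖ ≤ ‖S x‖ + ‖S (x + h)‖ := by
      have : S h = S (x + h) - S x := by rw [map_add]; abel
      rw [this]; linarith [norm_sub_le (S (x + h)) (S x)]
    calc C ≤ Real.sqrt (‖S x‖ + ‖S (x + h)‖) := Real.sqrt_le_sqrt (hSh.trans h2)
      _ ≤ Real.sqrt ‖S x‖ + Real.sqrt ‖S (x + h)‖ := by
        exact stmt14_sqrt_add (norm_nonneg (S x)) (norm_nonneg (S (x + h)))
  have hmain : volume.real (ball (0 : Euc d) (r / 2)) * C ≤ 2 * ∫ x in ball (0 : Euc d) r, f x := by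
    calc volume.real (ball (0 : Euc d) (r / 2)) * C
        = ∫ x in ball (0 : Euc d) (r / 2), C := by rw [setIntegral_const, smul_eq_mul]
      _ ≤ ∫ x in ball (0 : Euc d) (r / 2), (f x + f (x + h)) :=
          integral_mono (integrableOn_const measure_ball_lt_top.ne) ((hint 0 _).add hint2) hpt
      _ = _ := integral_add (hint 0 _) hint2
      _ ≤ _ := by rw [hshift]; linarith
  have hvol : volume.real (ball (0 : Euc d) r)
      = 2 ^ d * volume.real (ball (0 : Euc d) (r / 2)) := by
    have := Measure.addHaar_ball_mul_of_pos (volume : Measure (Euc d)) (0 : Euc d)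
      (r := 2) (by norm_num) (r / 2)
    rw [show 2 * (r / 2) = r by ring, finrank_euclideanSpace_fin] at this
    rw [Measure.real, Measure.real, this, ENNReal.toReal_mul, ENNReal.toReal_ofReal (by positivity)]
  have hvpos : 0 < volume.real (ball (0 : Euc d) (r / 2)) :=
    ENNReal.toReal_pos (measure_ball_pos _ _ (by positivity)).ne' measure_ball_lt_top.ne
  have hsq : Real.sqrt (r * |S ξ ξ ξ|) ≤ 2 * C := by
    rw [Real.sqrt_le_left (by positivity), mul_pow, hC, Real.sq_sqrt (by positivity)]
    nlinarith [mul_nonneg hr.le (abs_nonneg (S ξ ξ ξ))]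
  refine hsq.trans ?_
  rw [setAverage_eq, hvol, smul_eq_mul]
  set V := volume.real (ball (0 : Euc d) (r / 2))
  set I := ∫ x in ball (0 : Euc d) r, f x
  have : 4 * 2 ^ d * ((2 ^ d * V)⁻¹ * I) = 2 * ((2 * I) / V) := by
    field_simp; ring
  rw [this]
  have : C ≤ 2 * I / V := by rw [le_div_iff₀ hvpos]; linarith
  linarith

/-- lower bound for the averaged square root of `|⟨𝒮,x⟩|` over a ball,
for symmetric (0,3)-tensors `𝒮`. -/
theorem stmt14 (d : ℕ) :
    ∃ c : ℝ, 0 < c ∧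
      ∀ S : Euc d →L[ℝ] Euc d →L[ℝ] Euc d →L[ℝ] ℝ, Sym3 S →
      ∀ r : ℝ, 0 < r →
        c * Real.sqrt (r * tnorm S) ≤ ⨍ x in ball (0 : Euc d) r, Real.sqrt ‖S x‖ := by
  refine ⟨1 / (4 * 2 ^ d), by positivity, fun S _ r hr => ?_⟩
  set A := ⨍ x in ball (0 : Euc d) r, Real.sqrt ‖S x‖ with hA
  have hA0 : 0 ≤ A := by
    rw [hA, setAverage_eq]
    exact smul_nonneg (by positivity) (integral_nonneg fun x => Real.sqrt_nonneg _)
  have ht : tnorm S ≤ ((4 * 2 ^ d) * A) ^ 2 / r := by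
    refine Real.iSup_le (fun ξ => ?_) (by positivity)
    have := stmt14_aux S r hr ξ.1 (by simp)
    rw [Real.sqrt_le_left (by positivity)] at this
    rw [le_div_iff₀ hr]; linarith
  have h2 : Real.sqrt (r * tnorm S) ≤ (4 * 2 ^ d) * A := by
    rw [Real.sqrt_le_left (by positivity)]
    rw [le_div_iff₀ hr] at ht; linarith
  rw [div_mul_eq_mul_div, one_mul, div_le_iff₀ (by positivity)]
  linarith
end

section
/- There exists a constant C(d) > 0, depending only on the dimension d, such that for every symmetric d×d real matrix S, every vector p ∈ ℝ^d and every r > 0, |p| ≤ C(d) ( ⨍_{B_r(0)} |Sx + p|^{1/2} dx )². -/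
open MeasureTheory Metric Filter
open scoped RealInnerProductSpace ENNReal Topology

/-- the constant term of an affine map `x ↦ Sx + p` is controlled by the
normalized `L^{1/2}` quasi-norm over any ball centered at the origin. -/
theorem stmt15 (d : ℕ) :
    ∃ C : ℝ, 0 < C ∧
      ∀ S : Euc d →L[ℝ] Euc d, (∀ ξ η : Euc d, ⟪S ξ, η⟫ = ⟪ξ, S η⟫) →
      ∀ p : Euc d, ∀ r : ℝ, 0 < r →
        ‖p‖ ≤ C * (⨍ x in ball (0 : Euc d) r, Real.sqrt ‖S x + p‖) ^ 2 := by
  refine ⟨2, by norm_num, fun S _ p r hr => ?_⟩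
  set B := ball (0 : Euc d) r with hB
  set f : Euc d → ℝ := fun x => Real.sqrt ‖S x + p‖ with hf
  have hcont : Continuous f := by fun_prop
  have hint : ∀ g : Euc d → ℝ, Continuous g → IntegrableOn g B := fun g hg =>
    (hg.continuousOn.integrableOn_compact (isCompact_closedBall (0 : Euc d) r)).mono_set
      ball_subset_closedBall
  have hcn : Continuous (fun x => f (-x)) := hcont.comp continuous_neg
  have hsymm : ∫ x in B, f (-x) = ∫ x in B, f x := by
    have h := (Measure.measurePreserving_neg (volume : Measure (Euc d))).setIntegral_preimage_emb
      (Homeomorph.neg (Euc d)).measurableEmbedding f B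
    have hpre : (fun x : Euc d => -x) ⁻¹' B = B := by
      ext x; simp [hB]
    rw [← h]
    change _ = ∫ x in (fun x : Euc d => -x) ⁻¹' B, f (-x)
    rw [hpre]
  have hpt : ∀ x, Real.sqrt (2 * ‖p‖) ≤ f x + f (-x) := by
    intro x
    have h1 : 2 * ‖p‖ ≤ ‖S x + p‖ + ‖S (-x) + p‖ := by
      calc 2 * ‖p‖ = ‖(2 : ℝ) • p‖ := by rw [norm_smul]; norm_num
        _ = ‖(S x + p) + (S (-x) + p)‖ := by
          congr 1; rw [map_neg, two_smul]; abel
        _ ≤ _ := norm_add_le _ _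
    refine Real.sqrt_le_iff.2 ⟨add_nonneg (Real.sqrt_nonneg _) (Real.sqrt_nonneg _), h1.trans ?_⟩
    have e1 := Real.sq_sqrt (norm_nonneg (S x + p))
    have e2 := Real.sq_sqrt (norm_nonneg (S (-x) + p))
    have e3 := mul_nonneg (Real.sqrt_nonneg ‖S x + p‖) (Real.sqrt_nonneg ‖S (-x) + p‖)
    simp only [hf]
    nlinarith
  have hvpos : 0 < volume.real B :=
    ENNReal.toReal_pos (measure_ball_pos volume _ hr).ne' measure_ball_lt_top.ne
  have hle : volume.real B * Real.sqrt (2 * ‖p‖) ≤ 2 * ∫ x in B, f x := by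
    have h := integral_mono (μ := volume.restrict B) (hint _ continuous_const)
      ((hint _ hcont).add (hint _ hcn)) (fun x => hpt x)
    have h2 : ∫ x in B, (f + fun x => f (-x)) x = (∫ x in B, f x) + ∫ x in B, f (-x) :=
      integral_add (hint _ hcont) (hint _ hcn)
    rw [h2, hsymm, setIntegral_const, smul_eq_mul] at h
    linarith
  have havg : Real.sqrt (2 * ‖p‖) ≤ 2 * ⨍ x in B, f x := by
    rw [setAverage_eq, smul_eq_mul]
    rw [← mul_le_mul_iff_right₀ hvpos]
    calc _ ≤ _ := hle
      _ = _ := by field_simp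
  have hsq := Real.sq_sqrt (show 0 ≤ 2 * ‖p‖ by positivity)
  have := Real.sqrt_nonneg (2 * ‖p‖)
  nlinarith
end

section
/- There exists a constant C(d) > 0, depending only on the dimension d, such that for every symmetric (0,3)-tensor 𝒮 on ℝ^d, every symmetric d×d matrix P and every r > 0, |P| ≤ C(d) ( ⨍_{B_r(0)} |⟨𝒮,x⟩ + P|^{1/2} dx )², where ⟨𝒮,x⟩ is the d×d matrix with entries x_k 𝒮^{i,j,k} and |·| denotes the matrix operator norm. -/
open MeasureTheory Metric Filter
open scoped RealInnerProductSpace ENNReal Topology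

theorem aux_cont {E F : Type*} [NormedAddCommGroup E] [NormedSpace ℝ E]
    [NormedAddCommGroup F] [NormedSpace ℝ F] (S : E →L[ℝ] E →L[ℝ] F) (P : E →L[ℝ] F) :
    Continuous fun x => Real.sqrt ‖S x + P‖ :=
  Real.continuous_sqrt.comp (S.continuous.add continuous_const).norm

theorem aux_norm {E F : Type*} [NormedAddCommGroup E] [NormedSpace ℝ E]
    [NormedAddCommGroup F] [NormedSpace ℝ F] (S : E →L[ℝ] E →L[ℝ] F) (P : E →L[ℝ] F) (x : E) :
    2 * ‖P‖ ≤ ‖S x + P‖ + ‖S (-x) + P‖ := by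
  have h3 : (2 : ℝ) • P = (S x + P) + (S (-x) + P) := by
    rw [map_neg, two_smul]; abel
  calc 2 * ‖P‖ = ‖(2 : ℝ) • P‖ := by rw [norm_smul]; norm_num
    _ ≤ _ := by rw [h3]; exact norm_add_le _ _

/-- the constant term of a matrix-valued affine map `x ↦ ⟨𝒮,x⟩ + P` is
controlled by the normalized `L^{1/2}` quasi-norm over any ball centered at the origin. -/
theorem stmt16 (d : ℕ) :
    ∃ C : ℝ, 0 < C ∧
      ∀ S : Euc d →L[ℝ] Euc d →L[ℝ] Euc d →L[ℝ] ℝ, Sym3 S →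
      ∀ P : Euc d →L[ℝ] Euc d →L[ℝ] ℝ, (∀ ξ η : Euc d, P ξ η = P η ξ) →
      ∀ r : ℝ, 0 < r →
        ‖P‖ ≤ C * (⨍ x in ball (0 : Euc d) r, Real.sqrt ‖S x + P‖) ^ 2 := by
  refine ⟨2, by norm_num, ?_⟩
  intro S _ P _ r hr
  set f : Euc d → ℝ := fun x => Real.sqrt ‖S x + P‖ with hf
  have hfc : Continuous f := by
    exact aux_cont S P
  have hint : ∀ g : Euc d → ℝ, Continuous g → IntegrableOn g (ball (0 : Euc d) r) := by
    intro g hg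
    exact (hg.continuousOn.integrableOn_compact (isCompact_closedBall (0 : Euc d) r)).mono_set
      ball_subset_closedBall
  have hneg : ∫ x in ball (0 : Euc d) r, f (-x) = ∫ x in ball (0 : Euc d) r, f x := by
    have h := (Measure.measurePreserving_neg (volume : Measure (Euc d))).setIntegral_preimage_emb
      (MeasurableEquiv.neg (Euc d)).measurableEmbedding f (ball (0 : Euc d) r)
    have hp : (Neg.neg ⁻¹' ball (0 : Euc d) r) = ball (0 : Euc d) r := by
      ext x; simp
    rw [hp] at h
    exact h
  have hpt : ∀ x : Euc d, Real.sqrt (2 * ‖P‖) ≤ f x + f (-x) := by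
    intro x
    have h2 : 2 * ‖P‖ ≤ ‖S x + P‖ + ‖S (-x) + P‖ := aux_norm S P x
    refine Real.sqrt_le_iff.2 ⟨by positivity, ?_⟩
    have e1 := Real.sq_sqrt (norm_nonneg (S x + P))
    have e2 := Real.sq_sqrt (norm_nonneg (S (-x) + P))
    have e3 : 0 ≤ f x * f (-x) := by positivity
    simp only [hf] at e3 ⊢
    nlinarith
  have hfin : volume (ball (0 : Euc d) r) ≠ ⊤ := measure_ball_lt_top.ne
  have hpos : 0 < volume.real (ball (0 : Euc d) r) :=
    ENNReal.toReal_pos (measure_ball_pos _ _ hr).ne' hfin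
  have hmain : volume.real (ball (0 : Euc d) r) * Real.sqrt (2 * ‖P‖)
      ≤ 2 * ∫ x in ball (0 : Euc d) r, f x := by
    have h4 : ∫ _x in ball (0 : Euc d) r, Real.sqrt (2 * ‖P‖)
        ≤ ∫ x in ball (0 : Euc d) r, (f x + f (-x)) :=
      integral_mono (hint _ continuous_const) (hint _ (hfc.add (hfc.comp continuous_neg))) hpt
    rw [integral_add (hint _ hfc) (hint (fun x => f (-x)) (hfc.comp continuous_neg)), hneg, setIntegral_const,
      smul_eq_mul] at h4
    linarith
  have hA : Real.sqrt (2 * ‖P‖) ≤ 2 * ⨍ x in ball (0 : Euc d) r, f x := by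
    rw [setAverage_eq, smul_eq_mul]
    rw [mul_comm, ← le_div_iff₀ hpos] at hmain
    calc _ ≤ _ := hmain
      _ = _ := by field_simp
  have h5 := pow_le_pow_left₀ (Real.sqrt_nonneg _) hA 2
  rw [Real.sq_sqrt (by positivity)] at h5
  nlinarith
end
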